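/- arXiv:1404.5662 — 2 statements merged into one kernel-verified Lean document; each statement's English description precedes it below -/
import Mathlib

section
/- Let P ⊆ ℝ^d be a closed polyhedron (a finite intersection of closed halfspaces) with nonempty interior such that the origin lies on the boundary of P. Let Z be a (d−2)-dimensional linear subspace that does not intersect the interior of P, and fix an orthonormal basis u, w of the 2-dimensional orthogonal complement Z^⊥. Define the angle θ : ℝ^d → [−π, π) by θ(x) = the polar angle of (⟨x,u⟩, ⟨x,w⟩), and assume: (1) there exist a, b ∈ (−π, π) with a < 0 < b such that θ(P) = [a, b]; (2) the set P ∩ { x : a ≤ θ(x) ≤ 0 } is bounded. Let f : P → ℝ be continuous and set K_t = { x ∈ P : θ(x) ∈ [−π, t] }. Then the function g(t) = ∫_{K_t} f(x) dx is differentiable at t = 0. -/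
open MeasureTheory Finset
open scoped ProbabilityTheory
open scoped RealInnerProductSpace

noncomputable section

abbrev Euc (d : ℕ) := EuclideanSpace ℝ (Fin d)

section GeneralSpace

variable {V : Type*} [NormedAddCommGroup V] [NormedSpace ℝ V]

/-- The dimension of a set: the rank of the direction of its affine span. -/
noncomputable def sdim (F : Set V) : ℕ := Module.finrank ℝ (affineSpan ℝ F).direction

/-- `F` is a simplex with `n` vertices (an `(n-1)`-dimensional simplex). -/
def IsSimplexWith (n : ℕ) (F : Set V) : Prop :=
  ∃ w : Fin n → V, AffineIndependent ℝ w ∧ F = convexHull ℝ (Set.range w)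

/-- A polytope is the convex hull of finitely many points. -/
def IsPolytope (P : Set V) : Prop := ∃ S : Finset V, P = convexHull ℝ (S : Set V)

/-- A facet of a `d`-dimensional polytope: an exposed face of dimension `d - 1`. -/
def IsFacetOf (d : ℕ) (P F : Set V) : Prop := IsExposed ℝ P F ∧ sdim F = d - 1

/-- A `d`-dimensional simplicial polytope: a polytope of dimension `d`, each facet of which
is a `(d-1)`-dimensional simplex (i.e. has `d` affinely independent vertices). -/
def IsSimplicialPolytope (d : ℕ) (P : Set V) : Prop :=
  IsPolytope P ∧ sdim P = d ∧ ∀ F : Set V, IsFacetOf d P F → IsSimplexWith d F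

end GeneralSpace

/-- A convex body: compact, convex, with nonempty interior. -/
def IsConvexBody {d : ℕ} (K : Set (Euc d)) : Prop :=
  IsCompact K ∧ Convex ℝ K ∧ (interior K).Nonempty

/-- The barycenter `μ_K` of the uniform distribution on `K`. -/
noncomputable def centroid {d : ℕ} (K : Set (Euc d)) : Euc d :=
  (volume K).toReal⁻¹ • ∫ x in K, x

/-- The covariance matrix `A(K)` of the uniform distribution on `K`. -/
noncomputable def covMatrix {d : ℕ} (K : Set (Euc d)) : Matrix (Fin d) (Fin d) ℝ :=
  Matrix.of fun i j =>
    (volume K).toReal⁻¹ * ∫ x in K, (x i - centroid K i) * (x j - centroid K j)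

/-- The isotropic constant `L_K`, defined by `L_K ^ (2d) = det A(K) / vol(K) ^ 2`. -/
noncomputable def isoConst {d : ℕ} (K : Set (Euc d)) : ℝ :=
  ((covMatrix K).det / (volume K).toReal ^ 2) ^ ((2 * (d : ℝ))⁻¹)

/-- `K` is isotropic: its barycenter is the origin and its covariance matrix is the identity. -/
def IsIsotropic {d : ℕ} (K : Set (Euc d)) : Prop :=
  centroid K = 0 ∧ covMatrix K = 1

/-- `P` is a local extremum (local maximum or local minimum) of `K ↦ L_K` among convex bodies,
with respect to the Hausdorff metric. -/
def IsLocalExtremumOfIsoConst {d : ℕ} (P : Set (Euc d)) : Prop :=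
  (∃ ε > 0, ∀ K : Set (Euc d), IsConvexBody K →
      Metric.hausdorffDist K P < ε → isoConst K ≤ isoConst P) ∨
  (∃ ε > 0, ∀ K : Set (Euc d), IsConvexBody K →
      Metric.hausdorffDist K P < ε → isoConst P ≤ isoConst K)

/-- The polar angle of `(a, b) ∈ ℝ²`, normalized to lie in `[-π, π)`. -/
noncomputable def polarAngle (a b : ℝ) : ℝ :=
  if Complex.arg ⟨a, b⟩ = Real.pi then -Real.pi else Complex.arg ⟨a, b⟩

lemma polarAngle_eq_arg {p q : ℝ} (h : -Real.pi < polarAngle p q) :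
    polarAngle p q = Complex.arg ⟨p, q⟩ := by
  unfold polarAngle at h ⊢
  split_ifs with h'
  · simp [h'] at h
  · rfl

lemma neg_pi_le_polarAngle (p q : ℝ) : -Real.pi ≤ polarAngle p q := by
  unfold polarAngle
  split_ifs
  · rfl
  · exact (Complex.neg_pi_lt_arg _).le

lemma polarAngle_of_nonneg {p : ℝ} (hp : 0 ≤ p) (q : ℝ) :
    polarAngle p q = Complex.arg ⟨p, q⟩ := by
  unfold polarAngle
  rw [if_neg]
  rw [Complex.arg_eq_pi_iff]
  exact fun h => absurd h.1 (not_lt.mpr hp)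

lemma measurable_polarAngle : Measurable fun z : ℝ × ℝ => polarAngle z.1 z.2 := by
  unfold polarAngle
  have h : Measurable fun z : ℝ × ℝ => Complex.arg ⟨z.1, z.2⟩ :=
    Complex.measurable_arg.comp (Complex.measurableEquivRealProd.symm.measurable)
  exact Measurable.ite (h (measurableSet_singleton _)) measurable_const h

lemma polarAngle_le_iff_of_pos {p q t : ℝ} (hp : 0 < p) (ht : |t| < Real.pi / 2) :
    polarAngle p q ≤ t ↔ q ≤ Real.tan t * p := by
  have harg := abs_lt.1 (Complex.abs_arg_lt_pi_div_two_iff (z := ⟨p, q⟩) |>.2 (Or.inl hp))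
  rw [polarAngle_of_nonneg hp.le, ← div_le_iff₀ hp, ← Complex.tan_arg ⟨p, q⟩]
  exact (Real.strictMonoOn_tan.le_iff_le harg (abs_lt.1 ht)).symm

lemma polarAngle_le_iff_of_nonpos {p q t : ℝ} (hp : p ≤ 0) (hq : q ≠ 0)
    (ht : |t| < Real.pi / 2) : polarAngle p q ≤ t ↔ q < 0 := by
  obtain ⟨ht1, ht2⟩ := abs_lt.1 ht
  have hpi := Real.pi_pos
  have hne : Complex.arg ⟨p, q⟩ ≠ Real.pi := fun h => hq (Complex.arg_eq_pi_iff.1 h).2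
  unfold polarAngle
  rw [if_neg hne]
  constructor
  · intro h
    have := (Complex.arg_lt_pi_div_two_iff (z := ⟨p, q⟩)).1 (by linarith)
    rcases this with h1 | h1 | h1
    · exact absurd h1 (not_lt.2 hp)
    · exact h1
    · exact absurd (congrArg Complex.im h1) hq
  · intro h
    by_contra! hlt
    rcases (Complex.neg_pi_div_two_lt_arg_iff (z := ⟨p, q⟩)).1 (by linarith) with h1 | h1
    · exact absurd h1 (not_lt.2 hp)
    · exact absurd h1 (not_le.2 h)

lemma pos_of_polarAngle_pos_of_le {p q t : ℝ} (h0 : 0 < polarAngle p q)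
    (h : polarAngle p q ≤ t) (ht : |t| < Real.pi / 2) :
    0 < p ∧ 0 ≤ q ∧ q ≤ Real.tan t * p := by
  have heq := polarAngle_eq_arg (p := p) (q := q) (by linarith [Real.pi_pos])
  have hlt : |Complex.arg ⟨p, q⟩| < Real.pi / 2 := by
    rw [← heq, abs_of_pos h0]
    exact h.trans_lt (lt_of_le_of_lt (le_abs_self t) ht)
  have hp : 0 < p := by
    rcases Complex.abs_arg_lt_pi_div_two_iff.1 hlt with h1 | h1
    · exact h1
    · rw [heq, h1] at h0
      simp at h0
  refine ⟨hp, ?_, (polarAngle_le_iff_of_pos hp ht).1 h⟩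
  exact (Complex.arg_nonneg_iff (z := ⟨p, q⟩)).1 (heq ▸ h0.le)

lemma snd_neg_of_polarAngle_neg {p q : ℝ} (h0 : -Real.pi < polarAngle p q)
    (h : polarAngle p q < 0) : q < 0 := by
  rw [polarAngle_eq_arg h0] at h
  exact (Complex.arg_neg_iff (z := ⟨p, q⟩)).1 h

lemma snd_pos_of_polarAngle_pos {p q : ℝ} (h : 0 < polarAngle p q) : 0 < q := by
  have heq := polarAngle_eq_arg (p := p) (q := q) (by linarith [Real.pi_pos])
  have hne : Complex.arg ⟨p, q⟩ ≠ Real.pi := by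
    intro h'
    simp only [polarAngle, h', if_true] at h
    linarith [Real.pi_pos]
  have h1 : 0 < Real.sin (Complex.arg ⟨p, q⟩) :=
    Real.sin_pos_of_pos_of_lt_pi (heq ▸ h) (lt_of_le_of_ne (Complex.arg_le_pi _) hne)
  rw [Complex.sin_arg] at h1
  exact (div_pos_iff_of_pos_right (norm_pos_iff.2 fun h2 => by simp [h2] at h1)).1 h1

/-- The points of a set which is star-shaped at the origin and lie in a thin wedge next to
a bounded half-hyperplane section form a bounded set. -/
lemma exists_wedge_subset_closedBall {E : Type*} [NormedAddCommGroup E] [InnerProductSpace ℝ E]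
    [FiniteDimensional ℝ E] {P : Set E} (hc : IsClosed P) (hs : StarConvex ℝ 0 P)
    {u w : E} (hu : ‖u‖ = 1) {R : ℝ} (hR : 0 < R)
    (hsec : ∀ x ∈ P, 0 ≤ ⟪x, u⟫ → ⟪x, w⟫ = 0 → ‖x‖ < R) :
    ∃ τ > 0, ∀ x ∈ P, 0 ≤ ⟪x, u⟫ → 0 ≤ ⟪x, w⟫ → ⟪x, w⟫ ≤ τ * ⟪x, u⟫ → ‖x‖ ≤ R := by
  have hcpt : IsCompact (Metric.sphere (0 : E) R ∩ (P ∩ {x | 0 ≤ ⟪x, w⟫})) :=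
    (isCompact_sphere 0 R).inter_right
      (hc.inter (isClosed_le continuous_const (by fun_prop)))
  obtain ⟨δ, hδ, hle⟩ := hcpt.exists_forall_le' (f := fun x => max ⟪x, w⟫ (-⟪x, u⟫)) (a := 0)
    (by fun_prop) (by
      rintro x ⟨hxR, hxP, hxw⟩
      by_contra! hcon
      obtain ⟨h1, h2⟩ := max_le_iff.1 hcon
      have := hsec x hxP (by linarith) (le_antisymm h1 hxw)
      rw [mem_sphere_zero_iff_norm] at hxR
      linarith)
  refine ⟨δ / (2 * R), by positivity, fun x hx hxu hxw hxle => ?_⟩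
  by_contra! hlt
  have hn : 0 < ‖x‖ := hR.trans hlt
  have hk : 0 < R / ‖x‖ := by positivity
  have hyn : ‖(R / ‖x‖) • x‖ = R := by
    rw [norm_smul, Real.norm_of_nonneg hk.le, div_mul_cancel₀ _ hn.ne']
  have hyP : (R / ‖x‖) • x ∈ P := hs.smul_mem hx hk.le ((div_le_one hn).2 hlt.le)
  have hyu : ⟪(R / ‖x‖) • x, u⟫ ≤ R := by
    simpa [hyn, hu] using real_inner_le_norm ((R / ‖x‖) • x) u
  have hyu0 : 0 ≤ ⟪(R / ‖x‖) • x, u⟫ := by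
    rw [real_inner_smul_left]; positivity
  have hyw0 : 0 ≤ ⟪(R / ‖x‖) • x, w⟫ := by
    rw [real_inner_smul_left]; positivity
  have hyle : ⟪(R / ‖x‖) • x, w⟫ ≤ δ / (2 * R) * ⟪(R / ‖x‖) • x, u⟫ := by
    rw [real_inner_smul_left, real_inner_smul_left, mul_left_comm]
    gcongr
  have hhalf : δ / (2 * R) * ⟪(R / ‖x‖) • x, u⟫ ≤ δ / 2 := by
    calc _ ≤ δ / (2 * R) * R := by gcongr
      _ = δ / 2 := by field_simp
  have := hle _ ⟨by simpa using hyn, hyP, hyw0⟩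
  rcases le_max_iff.1 this with h | h <;> linarith

section HyperplaneSlices

variable {E : Type*} [NormedAddCommGroup E] [InnerProductSpace ℝ E]

lemma inner_eq_zero_of_mem_orthogonal_span {w : E} (y : (ℝ ∙ w)ᗮ) : ⟪(y : E), w⟫ = 0 := by
  rw [real_inner_comm]
  exact Submodule.mem_orthogonal_singleton_iff_inner_right.1 y.2

lemma norm_le_norm_add_smul {w : E} (y : (ℝ ∙ w)ᗮ) (q : ℝ) : ‖y‖ ≤ ‖(y : E) + q • w‖ := by
  have h : ⟪(y : E), q • w⟫ = 0 := by
    rw [real_inner_smul_right, inner_eq_zero_of_mem_orthogonal_span, mul_zero]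
  have := norm_add_sq_eq_norm_sq_add_norm_sq_of_inner_eq_zero _ _ h
  change ‖(y : E)‖ ≤ _
  exact abs_le_of_sq_le_sq' (by nlinarith [sq_nonneg ‖q • w‖]) (norm_nonneg _) |>.2

variable [FiniteDimensional ℝ E]

/-- The decomposition of a point into its component orthogonal to a unit vector `w` and its
coordinate along `w`. -/
def hyperplaneProdEquiv (w : E) (hw : ‖w‖ = 1) : ((ℝ ∙ w)ᗮ × ℝ) ≃L[ℝ] E :=
  LinearEquiv.toContinuousLinearEquiv
    { toFun := fun z => (z.1 : E) + z.2 • w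
      map_add' := fun z z' => by simp [add_smul]; abel
      map_smul' := fun c z => by simp [mul_smul]
      invFun := fun x => (⟨x - ⟪x, w⟫ • w, by
        rw [Submodule.mem_orthogonal_singleton_iff_inner_left, inner_sub_left,
          real_inner_smul_left, real_inner_self_eq_norm_sq, hw]
        ring⟩, ⟪x, w⟫)
      left_inv := fun z => by
        have h : ⟪(z.1 : E) + z.2 • w, w⟫ = z.2 := by
          rw [inner_add_left, inner_eq_zero_of_mem_orthogonal_span, real_inner_smul_left,
            real_inner_self_eq_norm_sq, hw]
          ring
        refine Prod.ext (Subtype.ext ?_) h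
        change (z.1 : E) + z.2 • w - ⟪(z.1 : E) + z.2 • w, w⟫ • w = z.1
        rw [h, add_sub_cancel_right]
      right_inv := fun x => by simp }

lemma exists_integral_eq_mul_integral_integral [MeasurableSpace E] [BorelSpace E] {w : E}
    (hw : ‖w‖ = 1) (μ : Measure E) [μ.IsAddHaarMeasure] :
    ∃ c : ℝ, ∀ D : E → ℝ, Integrable D μ →
      ∫ x, D x ∂μ = c * ∫ y : (ℝ ∙ w)ᗮ, (∫ q : ℝ, D (y + q • w)) ∂Measure.addHaar := by
  let e := hyperplaneProdEquiv w hw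
  let ν : Measure ((ℝ ∙ w)ᗮ × ℝ) := Measure.addHaar.prod volume
  have : (ν.map e).IsAddHaarMeasure := e.isAddHaarMeasure_map ν
  let c := Measure.addHaarScalarFactor μ (ν.map e)
  have hc : (c : ENNReal) ≠ 0 := by
    simpa using (Measure.addHaarScalarFactor_pos_of_isAddHaarMeasure μ (ν.map e)).ne'
  have hμ : μ = (c : ENNReal) • ν.map e := Measure.isAddLeftInvariant_eq_smul μ (ν.map e)
  refine ⟨c, fun D hD => ?_⟩
  have hemb : MeasurableEmbedding e := e.toHomeomorph.measurableEmbedding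
  have hDν : Integrable (D ∘ e) ν := by
    rw [← hemb.integrable_map_iff]
    exact (integrable_smul_measure hc ENNReal.coe_ne_top).1 (hμ ▸ hD)
  conv_lhs => rw [hμ]
  rw [integral_smul_measure, hemb.integral_map, smul_eq_mul]
  congr 1
  exact integral_prod _ hDν

/-- A convex set whose interior meets the hyperplane `wᗮ` has the property that almost every
point of the hyperplane lies in its interior or in its complement. -/
lemma Convex.ae_mem_interior_or_notMem_of_hyperplane [MeasurableSpace E] [BorelSpace E]
    {P : Set E} (hP : Convex ℝ P) {w : E} {x₀ : E} (hx₀ : x₀ ∈ interior P) (hx₀w : ⟪x₀, w⟫ = 0) :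
    ∀ᵐ y : (ℝ ∙ w)ᗮ ∂Measure.addHaar, (y : E) ∈ interior P ∨ (y : E) ∉ P := by
  have hC : Convex ℝ {y : (ℝ ∙ w)ᗮ | (y : E) ∈ P} :=
    hP.linear_preimage (ℝ ∙ w)ᗮ.subtype
  let y₀ : (ℝ ∙ w)ᗮ := ⟨x₀, Submodule.mem_orthogonal_singleton_iff_inner_left.2 hx₀w⟩
  have hnull := hC.addHaar_frontier Measure.addHaar
  filter_upwards [compl_mem_ae_iff.2 hnull] with y hy
  by_cases hyP : (y : E) ∈ P
  swap
  · exact Or.inr hyP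
  left
  have hyint : y ∈ interior {y : (ℝ ∙ w)ᗮ | (y : E) ∈ P} := by
    by_contra h
    exact hy ⟨subset_closure hyP, h⟩
  have hcont : Continuous fun s : ℝ => y + s • (y - y₀) := by fun_prop
  have hev : ∀ᶠ s : ℝ in nhds 0, y + s • (y - y₀) ∈ {y : (ℝ ∙ w)ᗮ | (y : E) ∈ P} :=
    hcont.continuousAt.eventually (by
      change _ ∈ nhds (y + (0 : ℝ) • (y - y₀))
      rw [zero_smul, add_zero]
      exact mem_interior_iff_mem_nhds.1 hyint)
  obtain ⟨s, hsP, hs⟩ := ((hev.filter_mono nhdsWithin_le_nhds).and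
    (self_mem_nhdsWithin : Set.Ioi (0 : ℝ) ∈ nhdsWithin 0 (Set.Ioi 0))).exists
  have hs' : (0 : ℝ) < s := hs
  have hcombo := hP.combo_interior_self_mem_interior hx₀ hsP (a := s / (1 + s)) (b := 1 / (1 + s))
    (by positivity) (by positivity) (by field_simp; ring)
  convert hcombo using 1
  simp only [Submodule.coe_add, Submodule.coe_smul, Submodule.coe_sub, y₀]
  match_scalars <;> field_simp
  ring

end HyperplaneSlices

/-- Differentiation of a parametric integral of `Φ y` over intervals with endpoints `0` and
`T * p y`, with respect to `T` at `0`. -/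
lemma hasDerivAt_integral_intervalIntegral_mul {α : Type*} [MeasurableSpace α] {μ : Measure α}
    {Φ : α → ℝ → ℝ} (hΦ : Measurable (Function.uncurry Φ)) {B p : α → ℝ} (hp : Measurable p)
    (hB : ∀ y q, |Φ y q| ≤ B y) (hint : Integrable (fun y => B y * p y) μ)
    (hcont : ∀ᵐ y ∂μ, p y ≠ 0 → ContinuousAt (Φ y) 0) :
    HasDerivAt (fun T : ℝ => ∫ y, (∫ q in (0 : ℝ)..T * p y, Φ y q) ∂μ)
      (∫ y, p y * Φ y 0 ∂μ) 0 := by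
  have hmeas : ∀ y, Measurable (Φ y) := fun y => hΦ.comp measurable_prodMk_left
  have hii : ∀ y s t, IntervalIntegrable (Φ y) volume s t := fun y s t =>
    (intervalIntegrable_const (c := B y)).mono_fun (hmeas y).aestronglyMeasurable
      (Filter.Eventually.of_forall fun q => by
        simpa using (hB y q).trans (le_abs_self _))
  refine (hasDerivAt_integral_of_dominated_loc_of_lip (bound := fun y => B y * p y)
    (F := fun T y => ∫ q in (0 : ℝ)..T * p y, Φ y q) Filter.univ_mem
    (Filter.Eventually.of_forall fun T => ?_) (by simp) ?_ ?_ hint ?_).2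
  · have hset : ∀ l r : α → ℝ, Measurable l → Measurable r →
        StronglyMeasurable fun y => ∫ q in Set.Ioc (l y) (r y), Φ y q := by
      intro l r hl hr
      have hS : MeasurableSet {z : α × ℝ | z.2 ∈ Set.Ioc (l z.1) (r z.1)} :=
        (measurableSet_lt (hl.comp measurable_fst) measurable_snd).inter
          (measurableSet_le measurable_snd (hr.comp measurable_fst))
      have := ((hΦ.indicator hS).stronglyMeasurable).integral_prod_right' (ν := volume)
      convert this using 2 with y
      rw [← integral_indicator measurableSet_Ioc]
      rfl
    exact ((hset _ _ measurable_const (hp.const_mul T)).sub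
      (hset _ _ (hp.const_mul T) measurable_const)).aestronglyMeasurable
  · exact (hp.mul (hΦ.comp measurable_prodMk_right)).aestronglyMeasurable
  · refine Filter.Eventually.of_forall fun y => ?_
    refine LipschitzOnWith.of_dist_le_mul fun T _ S _ => ?_
    have hBy : 0 ≤ B y := (abs_nonneg _).trans (hB y 0)
    rw [dist_eq_norm, intervalIntegral.integral_interval_sub_left (hii _ _ _) (hii _ _ _)]
    refine (intervalIntegral.norm_integral_le_of_norm_le_const fun q _ => hB y q).trans ?_
    rw [← sub_mul, abs_mul, Real.coe_nnabs, abs_mul, abs_of_nonneg hBy, Real.dist_eq]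
    exact le_of_eq (by ring)
  · filter_upwards [hcont] with y hy
    by_cases hpy : p y = 0
    · simpa [hpy] using hasDerivAt_const (0 : ℝ) (0 : ℝ)
    have h1 : HasDerivAt (fun s : ℝ => ∫ q in (0 : ℝ)..s, Φ y q) (Φ y 0) (0 * p y) := by
      rw [zero_mul]
      exact intervalIntegral.integral_hasDerivAt_right (hii _ _ _)
        (hmeas y).stronglyMeasurable.stronglyMeasurableAtFilter (hy hpy)
    have h2 : HasDerivAt (fun T : ℝ => T * p y) (p y) 0 := by
      simpa using (hasDerivAt_id (0 : ℝ)).mul_const (p y)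
    rw [mul_comm]
    exact h1.comp (0 : ℝ) h2

lemma Convex.exists_mem_interior_inner_eq_zero {E : Type*} [NormedAddCommGroup E]
    [InnerProductSpace ℝ E] {P : Set E} (hP : Convex ℝ P) (hint : (interior P).Nonempty)
    {w x y : E} (hx : x ∈ P) (hxw : ⟪x, w⟫ < 0) (hy : y ∈ P) (hyw : 0 < ⟪y, w⟫) :
    ∃ z ∈ interior P, ⟪z, w⟫ = 0 := by
  have hcl : P ⊆ closure (interior P) :=
    hP.closure_interior_eq_closure_of_nonempty_interior hint ▸ subset_closure
  have hcont : Continuous fun z : E => ⟪z, w⟫ := by fun_prop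
  obtain ⟨x', hx'w, hx'⟩ := mem_closure_iff.1 (hcl hx) {z | ⟪z, w⟫ < 0}
    (isOpen_lt hcont continuous_const) hxw
  obtain ⟨y', hy'w, hy'⟩ := mem_closure_iff.1 (hcl hy) {z | 0 < ⟪z, w⟫}
    (isOpen_lt continuous_const hcont) hyw
  exact hP.interior.isPreconnected.intermediate_value hx' hy' hcont.continuousOn
    ⟨le_of_lt hx'w, le_of_lt hy'w⟩

/-- Along a line in direction `w`, passing from angles at most `0` to angles at most `t` amounts
to integrating over an interval of length proportional to `Real.tan t`. -/
lemma integral_indicator_polarAngle_le_sub {φ : ℝ → ℝ} (hφ : LocallyIntegrable φ) (p : ℝ) {t : ℝ}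
    (ht : |t| < Real.pi / 2) :
    ∫ q, ({q | polarAngle p q ≤ t}.indicator φ q - {q | polarAngle p q ≤ 0}.indicator φ q) =
      ∫ q in (0 : ℝ)..Real.tan t * max p 0, φ q := by
  have hIoc : ∀ l r : ℝ, Integrable ((Set.Ioc l r).indicator φ) := fun l r =>
    (integrable_indicator_iff measurableSet_Ioc).2
      ((hφ.integrableOn_isCompact isCompact_Icc).mono_set Set.Ioc_subset_Icc_self)
  rw [intervalIntegral, ← integral_indicator measurableSet_Ioc,
    ← integral_indicator measurableSet_Ioc, ← integral_sub (hIoc _ _) (hIoc _ _)]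
  refine integral_congr_ae ?_
  filter_upwards [compl_mem_ae_iff.2 (measure_singleton (0 : ℝ))] with q hq
  have h0 : |(0 : ℝ)| < Real.pi / 2 := by simpa using Real.pi_pos
  rcases lt_or_ge 0 p with hp | hp
  · simp only [Set.indicator, Set.mem_ofPred_eq, polarAngle_le_iff_of_pos hp ht,
      polarAngle_le_iff_of_pos hp h0, Real.tan_zero, zero_mul, max_eq_left hp.le, Set.mem_Ioc]
    split_ifs <;> grind
  · simp only [Set.indicator, Set.mem_ofPred_eq, polarAngle_le_iff_of_nonpos hp hq ht,
      polarAngle_le_iff_of_nonpos hp hq h0, max_eq_right hp, mul_zero, Set.Ioc_self, sub_self]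

/-- Lemma: differentiability with respect to hinging. Let `P ⊆ ℝ^d` be a
closed polyhedron with nonempty interior whose boundary contains the origin, `Z` a
`(d-2)`-dimensional subspace not meeting the interior of `P`, and `θ` the polar angle in the
plane `Zᗮ` (with orthonormal basis `u, w`). If `θ(P) = [a, b]` with `a < 0 < b`,
`a, b ∈ (-π, π)`, and `P ∩ {a ≤ θ ≤ 0}` is bounded, then for any `f` continuous on `P` the
function `g(t) = ∫_{K_t} f` with `K_t = {x ∈ P : θ(x) ∈ [-π, t]}` is differentiable at `0`. -/
theorem stmt4 {d : ℕ} (P : Set (Euc d))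
    (hpoly : ∃ (m : ℕ) (a : Fin m → Euc d) (c : Fin m → ℝ),
      (∀ i, a i ≠ 0) ∧ P = ⋂ i, {x : Euc d | ⟪a i, x⟫ ≤ c i})
    (hint : (interior P).Nonempty) (h0 : (0 : Euc d) ∈ frontier P)
    (Z : Submodule ℝ (Euc d)) (hZdim : Module.finrank ℝ Z = d - 2)
    (hZP : (Z : Set (Euc d)) ∩ interior P = ∅)
    (u w : Euc d) (hu : u ∈ Zᗮ) (hw : w ∈ Zᗮ) (hun : ‖u‖ = 1) (hwn : ‖w‖ = 1)
    (huw : ⟪u, w⟫ = 0)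
    (θ : Euc d → ℝ) (hθ : θ = fun x => polarAngle ⟪x, u⟫ ⟪x, w⟫)
    (a b : ℝ) (ha : a ∈ Set.Ioo (-Real.pi) Real.pi) (hb : b ∈ Set.Ioo (-Real.pi) Real.pi)
    (ha0 : a < 0) (h0b : 0 < b)
    (hrange : θ '' P = Set.Icc a b)
    (hbdd : Bornology.IsBounded (P ∩ {x : Euc d | a ≤ θ x ∧ θ x ≤ 0}))
    (f : Euc d → ℝ) (hf : ContinuousOn f P) :
    DifferentiableAt ℝ
      (fun t : ℝ => ∫ x in {x ∈ P | θ x ∈ Set.Icc (-Real.pi) t}, f x) 0 := by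
  subst hθ
  obtain ⟨m, α, γ, -, hPeq⟩ := hpoly
  have hclosed : IsClosed P := hPeq ▸ isClosed_iInter fun i =>
    isClosed_le (by fun_prop) continuous_const
  have hconv : Convex ℝ P := hPeq ▸ convex_iInter fun i =>
    convex_halfSpace_le (innerₛₗ ℝ (α i)).isLinear _
  have h0P : (0 : Euc d) ∈ P := hclosed.frontier_subset h0
  obtain ⟨R₀, hR₀⟩ := hbdd.subset_closedBall 0
  obtain ⟨R, hRpos, hR₀R⟩ : ∃ R : ℝ, 0 < R ∧ R₀ < R :=
    ⟨max R₀ 0 + 1, by positivity, (le_max_left R₀ 0).trans_lt (lt_add_one _)⟩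
  have hlow : ∀ x ∈ P, polarAngle ⟪x, u⟫ ⟪x, w⟫ ≤ 0 → ‖x‖ < R := by
    intro x hx hx0
    have hmem : polarAngle ⟪x, u⟫ ⟪x, w⟫ ∈ Set.Icc a b := hrange ▸ Set.mem_image_of_mem _ hx
    have := hR₀ ⟨hx, hmem.1, hx0⟩
    rw [mem_closedBall_zero_iff] at this
    linarith
  have hsec : ∀ x ∈ P, 0 ≤ ⟪x, u⟫ → ⟪x, w⟫ = 0 → ‖x‖ < R := by
    intro x hx hxu hxw
    refine hlow x hx (le_of_eq ?_)
    rw [polarAngle_of_nonneg hxu, Complex.arg_eq_zero_iff]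
    exact ⟨hxu, hxw⟩
  obtain ⟨τ, hτ, hwedge⟩ := exists_wedge_subset_closedBall hclosed
    (hconv.starConvex h0P) hun hRpos hsec
  have hball : ∀ t, |t| < Real.arctan τ → ∀ x ∈ P, polarAngle ⟪x, u⟫ ⟪x, w⟫ ≤ t → ‖x‖ ≤ R := by
    intro t ht x hx hxt
    rcases le_or_gt (polarAngle ⟪x, u⟫ ⟪x, w⟫) 0 with h | h
    · exact (hlow x hx h).le
    have ht2 : |t| < Real.pi / 2 := ht.trans (Real.arctan_lt_pi_div_two τ)
    obtain ⟨hp, hq, hle⟩ := pos_of_polarAngle_pos_of_le h hxt ht2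
    refine hwedge x hx hp.le hq (hle.trans ?_)
    have htan : Real.tan t < τ := by
      conv_rhs => rw [← Real.tan_arctan τ]
      exact Real.strictMonoOn_tan (abs_lt.1 ht2) (Real.arctan_mem_Ioo τ)
        ((le_abs_self t).trans_lt ht)
    gcongr
  have hcpt : IsCompact (P ∩ Metric.closedBall 0 R) :=
    (isCompact_closedBall 0 R).inter_left hclosed
  have hfK : ContinuousOn f (P ∩ Metric.closedBall 0 R) := hf.mono Set.inter_subset_left
  obtain ⟨M, hM⟩ := hcpt.exists_bound_of_continuousOn hfK
  let F : Euc d → ℝ := (P ∩ Metric.closedBall 0 R).indicator f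
  have hFint : Integrable F :=
    (integrable_indicator_iff hcpt.measurableSet).2 (hfK.integrableOn_compact hcpt)
  have hFmeas : Measurable F := by
    classical
    have := hfK.measurable_piecewise (g := 0) continuousOn_const hcpt.measurableSet
    rwa [Set.piecewise_eq_indicator] at this
  have hθmeas : Measurable fun x : Euc d => polarAngle ⟪x, u⟫ ⟪x, w⟫ :=
    measurable_polarAngle.comp
      ((by fun_prop : Continuous fun x : Euc d => (⟪x, u⟫, ⟪x, w⟫)).measurable)
  have hSmeas : ∀ t : ℝ, MeasurableSet {x : Euc d | polarAngle ⟪x, u⟫ ⟪x, w⟫ ≤ t} := fun t =>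
    measurableSet_le hθmeas measurable_const
  have hg : ∀ t, |t| < Real.arctan τ →
      ∫ x in {x ∈ P | polarAngle ⟪x, u⟫ ⟪x, w⟫ ∈ Set.Icc (-Real.pi) t}, f x =
        ∫ x, {x : Euc d | polarAngle ⟪x, u⟫ ⟪x, w⟫ ≤ t}.indicator F x := by
    intro t ht
    rw [Set.indicator_indicator, integral_indicator ((hSmeas t).inter hcpt.measurableSet)]
    congr 2
    ext x
    constructor
    · rintro ⟨hx, -, hxt⟩
      exact ⟨hxt, hx, mem_closedBall_zero_iff.2 (hball t ht x hx hxt)⟩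
    · rintro ⟨hxt, hx, -⟩
      exact ⟨hx, neg_pi_le_polarAngle _ _, hxt⟩
  obtain ⟨c, hc⟩ := exists_integral_eq_mul_integral_integral hwn (volume : Measure (Euc d))
  let H := (ℝ ∙ w)ᗮ
  have hcu : ∀ (y : H) (q : ℝ), ⟪(y : Euc d) + q • w, u⟫ = ⟪(y : Euc d), u⟫ := by
    intro y q
    rw [inner_add_left, real_inner_smul_left, real_inner_comm u w, huw, mul_zero, add_zero]
  have hcw : ∀ (y : H) (q : ℝ), ⟪(y : Euc d) + q • w, w⟫ = q := by
    intro y q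
    rw [inner_add_left, inner_eq_zero_of_mem_orthogonal_span, real_inner_smul_left,
      real_inner_self_eq_norm_sq, hwn]
    ring
  let Φ : H → ℝ → ℝ := fun y q => F (y + q • w)
  let p : H → ℝ := fun y => max ⟪(y : Euc d), u⟫ 0
  let B : H → ℝ := (Metric.closedBall 0 R).indicator fun _ => M
  have hΦ : Measurable (Function.uncurry Φ) :=
    hFmeas.comp (by fun_prop : Continuous fun z : H × ℝ => (z.1 : Euc d) + z.2 • w).measurable
  have hpcont : Continuous p := by fun_prop
  have hB : ∀ y q, |Φ y q| ≤ B y := by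
    intro y q
    by_cases hmem : (y : Euc d) + q • w ∈ P ∩ Metric.closedBall 0 R
    · have hy : y ∈ Metric.closedBall (0 : H) R := mem_closedBall_zero_iff.2
        ((norm_le_norm_add_smul y q).trans (mem_closedBall_zero_iff.1 hmem.2))
      simp only [Φ, F, B, Set.indicator_of_mem hmem, Set.indicator_of_mem hy]
      exact hM _ hmem
    · simp only [Φ, F, B, Set.indicator_of_notMem hmem, abs_zero]
      exact Set.indicator_nonneg
        (fun _ _ => (norm_nonneg _).trans (hM 0 ⟨h0P, by simpa using hRpos.le⟩)) y
  have hBint : Integrable (fun y => B y * p y) (Measure.addHaar : Measure H) := by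
    have : (fun y => B y * p y) = (Metric.closedBall 0 R).indicator fun y => M * p y := by
      ext y
      simp only [B, Set.indicator]
      split_ifs <;> simp
    rw [this, integrable_indicator_iff Metric.isClosed_closedBall.measurableSet]
    exact (by fun_prop : Continuous fun y => M * p y).continuousOn.integrableOn_compact
      (isCompact_closedBall 0 R)
  obtain ⟨x₀, hx₀, hx₀w⟩ : ∃ z ∈ interior P, ⟪z, w⟫ = 0 := by
    obtain ⟨x, hx, hxa⟩ : a ∈ _ '' P := hrange ▸ Set.left_mem_Icc.2 (by linarith)
    obtain ⟨y, hy, hyb⟩ : b ∈ _ '' P := hrange ▸ Set.right_mem_Icc.2 (by linarith)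
    exact hconv.exists_mem_interior_inner_eq_zero hint
      hx (snd_neg_of_polarAngle_neg (ha.1.trans_eq hxa.symm) (hxa.trans_lt ha0))
      hy (snd_pos_of_polarAngle_pos (h0b.trans_eq hyb.symm))
  have hcontΦ : ∀ᵐ y : H ∂Measure.addHaar, p y ≠ 0 → ContinuousAt (Φ y) 0 := by
    filter_upwards [hconv.ae_mem_interior_or_notMem_of_hyperplane hx₀ hx₀w] with y hy hpy
    have hyu : 0 < ⟪(y : Euc d), u⟫ := by
      by_contra! h
      exact hpy (max_eq_right h)
    have hF : ContinuousAt F y := by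
      rcases hy with hy | hy
      · have hyR := hsec y (interior_subset hy) hyu.le (inner_eq_zero_of_mem_orthogonal_span y)
        have hnhds : P ∩ Metric.closedBall 0 R ∈ nhds (y : Euc d) :=
          Filter.inter_mem (mem_interior_iff_mem_nhds.1 hy)
            (Metric.closedBall_mem_nhds_of_mem (mem_ball_zero_iff.2 hyR))
        refine (hfK.continuousAt hnhds).congr ?_
        filter_upwards [hnhds] with x hx
        exact (Set.indicator_of_mem hx f).symm
      · refine (continuousAt_const (y := (0 : ℝ))).congr ?_
        filter_upwards [hclosed.isOpen_compl.mem_nhds hy] with x hx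
        exact (Set.indicator_of_notMem (fun h => hx h.1) f).symm
    have hline : Continuous fun q : ℝ => (y : Euc d) + q • w := by fun_prop
    refine ContinuousAt.comp (g := F) ?_ hline.continuousAt
    simpa using hF
  have hderiv := hasDerivAt_integral_intervalIntegral_mul (μ := Measure.addHaar) hΦ
    hpcont.measurable hB hBint hcontΦ
  have hΦloc : ∀ y, LocallyIntegrable (Φ y) := fun y =>
    (locallyIntegrable_const (B y)).mono (hΦ.comp measurable_prodMk_left).aestronglyMeasurable
      (Filter.Eventually.of_forall fun q => (hB y q).trans (le_abs_self _))
  have hkey : ∀ t, |t| < Real.arctan τ →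
      ∫ x in {x ∈ P | polarAngle ⟪x, u⟫ ⟪x, w⟫ ∈ Set.Icc (-Real.pi) t}, f x =
        (∫ x, {x : Euc d | polarAngle ⟪x, u⟫ ⟪x, w⟫ ≤ 0}.indicator F x) +
          c * ∫ y : H, (∫ q in (0 : ℝ)..Real.tan t * p y, Φ y q) ∂Measure.addHaar := by
    intro t ht
    have hi := fun s => hFint.indicator (hSmeas s)
    rw [hg t ht, ← sub_eq_iff_eq_add', ← integral_sub (hi t) (hi 0)]
    refine (hc _ ((hi t).sub (hi 0))).trans ?_
    congr 2
    ext y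
    rw [← integral_indicator_polarAngle_le_sub (hΦloc y) _
      (ht.trans (Real.arctan_lt_pi_div_two τ))]
    simp only [Pi.sub_apply, Set.indicator, Set.mem_ofPred_eq, hcu, hcw, Φ]
  have htan : HasDerivAt Real.tan (1 / Real.cos 0 ^ 2) 0 := Real.hasDerivAt_tan (by simp)
  have hcomp : DifferentiableAt ℝ (fun t : ℝ => ∫ y : H, (∫ q in (0 : ℝ)..Real.tan t * p y, Φ y q)
      ∂Measure.addHaar) 0 := by
    refine DifferentiableAt.comp (0 : ℝ) (g := fun T : ℝ => ∫ y : H,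
      (∫ q in (0 : ℝ)..T * p y, Φ y q) ∂Measure.addHaar) ?_ htan.differentiableAt
    rw [Real.tan_zero]
    exact hderiv.differentiableAt
  refine ((hcomp.const_mul c).const_add
    (∫ x, {x : Euc d | polarAngle ⟪x, u⟫ ⟪x, w⟫ ≤ 0}.indicator F x)).congr_of_eventuallyEq ?_
  filter_upwards [(continuous_abs (G := ℝ)).continuousAt.eventually_lt continuousAt_const
    (by simpa using hτ : |(0 : ℝ)| < Real.arctan τ)] with t ht using hkey t ht

end
end

section
/- Let K ⊆ ℝ^d be an isotropic simplicial polytope with unique irredundant H-representation K = ∩_{i=1}^m H_i (each H_i a closed halfspace). Fix a facet index i′ and let P = ∩_{i ≠ i′} H_i be the polyhedron obtained by relaxing H_{i′}. Let v_1, …, v_d be the vertices of facet i′ and fix j′ ∈ {1,…,d}. Let Z be the affine hull of { v_j : j ≠ j′ }, and introduce cylindrical coordinates (ρ, θ, z) with origin an arbitrary point of Z ∩ K: ρ ∈ [0,∞) and θ ∈ [−π, π) are polar coordinates in the 2-dimensional plane orthogonal to Z, z ranges over Z, and θ is oriented so that points of facet i′ have θ = 0 and all of K has θ ∈ (−π,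 0]. Let K_t = { x ∈ P : θ(x) ∈ [−π, t] } and S_0 = P ∩ { x : θ(x) = 0 }. Let D be the probability distribution on S_0 with density proportional to ρ(x). Then d/dt L_{K_t}^{2d} |_{t=0} = ( E_{X ∼ D}[‖X‖²] − d − 2 ) · ( d/dt vol(K_t) |_{t=0} ) / (vol K)³. -/
open MeasureTheory Finset
open scoped ProbabilityTheory
open scoped RealInnerProductSpace

noncomputable section

lemma polarAngle_neg_pi_le (a b : ℝ) : -Real.pi ≤ polarAngle a b := by
  unfold polarAngle
  split_ifs
  · rfl
  · exact (Complex.neg_pi_lt_arg _).le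

lemma sqrt_mul_sin_polarAngle (a b : ℝ) :
    √(a ^ 2 + b ^ 2) * Real.sin (polarAngle a b) = b := by
  have h := Complex.norm_mul_sin_arg ⟨a, b⟩
  have hn : ‖(⟨a, b⟩ : ℂ)‖ = √(a ^ 2 + b ^ 2) := by
    rw [Complex.norm_def, Complex.normSq_apply, sq, sq]
  rw [hn] at h
  unfold polarAngle
  split_ifs with hpi
  · rw [hpi] at h
    simpa using h
  · exact h

lemma polarAngle_mul_cos_mul_sin {r θ : ℝ} (hr : 0 < r) (hθ : θ ∈ Set.Ioo (-Real.pi) Real.pi) :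
    polarAngle (r * Real.cos θ) (r * Real.sin θ) = θ := by
  have h := Complex.arg_mul_cos_add_sin_mul_I hr ⟨hθ.1, hθ.2.le⟩
  have e : (r * (Complex.cos θ + Complex.sin θ * Complex.I) : ℂ) =
      ⟨r * Real.cos θ, r * Real.sin θ⟩ := by
    apply Complex.ext <;> simp [← Complex.ofReal_cos, ← Complex.ofReal_sin]
  rw [e] at h
  rw [polarAngle, h, if_neg hθ.2.ne]

lemma polarAngle_mul {s : ℝ} (hs : 0 < s) (a b : ℝ) :
    polarAngle (s * a) (s * b) = polarAngle a b := by
  have h : Complex.arg ⟨s * a, s * b⟩ = Complex.arg ⟨a, b⟩ := by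
    rw [← Complex.arg_real_mul ⟨a, b⟩ hs]
    congr 1
    apply Complex.ext <;> simp
  rw [polarAngle, polarAngle, h]

/-- The closed lower half-plane is the set of points with nonpositive polar angle. -/
lemma polarAngle_nonpos_iff (a b : ℝ) : polarAngle a b ≤ 0 ↔ b ≤ 0 := by
  unfold polarAngle
  split_ifs with hpi
  · have := (Complex.arg_eq_pi_iff.1 hpi).2
    simp only at this
    simp [this, Real.pi_pos.le]
  · constructor
    · intro h
      rcases h.lt_or_eq with h | h
      · exact (Complex.arg_neg_iff.1 h).le
      · exact (Complex.arg_eq_zero_iff.1 h).2.le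
    · intro h
      rcases h.lt_or_eq with h | rfl
      · exact (Complex.arg_neg_iff.2 h).le
      · by_contra! h
        apply hpi
        rcases lt_or_ge a 0 with ha | ha
        · exact Complex.arg_eq_pi_iff.2 ⟨ha, rfl⟩
        · rw [Complex.arg_eq_zero_iff.2 ⟨ha, rfl⟩] at h
          exact (lt_irrefl _ h).elim

lemma polarAngle_eq_zero_iff (a b : ℝ) : polarAngle a b = 0 ↔ 0 ≤ a ∧ b = 0 := by
  unfold polarAngle
  split_ifs with hpi
  · have := (Complex.arg_eq_pi_iff.1 hpi)
    simp only at this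
    constructor
    · intro h; linarith [Real.pi_pos]
    · intro h; linarith [this.1]
  · exact Complex.arg_eq_zero_iff

lemma measurable_polarAngle_s5 : Measurable fun p : ℝ × ℝ => polarAngle p.1 p.2 := by
  have h : Measurable fun p : ℝ × ℝ => Complex.arg ⟨p.1, p.2⟩ :=
    Complex.measurable_arg.comp Complex.measurableEquivRealProd.symm.measurable
  exact Measurable.ite (h (measurableSet_singleton _)) measurable_const h

section Hinge

variable {W : Type*}

/-- The point with cylindrical coordinates `(r, θ, z)`. -/
def cylPoint (θ : ℝ) (q : ℝ × W) : (ℝ × ℝ) × W := ((q.1 * Real.cos θ, q.1 * Real.sin θ), q.2)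

lemma indicator_cylPoint_of_le (Q : Set ((ℝ × ℝ) × W)) (f : (ℝ × ℝ) × W → ℝ) {θ t : ℝ} {q : ℝ × W}
    (hq : 0 < q.1) (hθ : θ ∈ Set.Ioo (-Real.pi) Real.pi) (h : θ ≤ t) :
    {y ∈ Q | polarAngle y.1.1 y.1.2 ≤ t}.indicator f (cylPoint θ q) =
      Q.indicator f (cylPoint θ q) := by
  have hang : polarAngle (cylPoint θ q).1.1 (cylPoint θ q).1.2 = θ :=
    polarAngle_mul_cos_mul_sin hq hθ
  by_cases hQ : cylPoint θ q ∈ Q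
  · rw [Set.indicator_of_mem hQ, Set.indicator_of_mem (by exact ⟨hQ, hang.trans_le h⟩)]
  · rw [Set.indicator_of_notMem hQ, Set.indicator_of_notMem fun h' => hQ h'.1]

lemma indicator_cylPoint_of_lt (Q : Set ((ℝ × ℝ) × W)) (f : (ℝ × ℝ) × W → ℝ) {θ t : ℝ} {q : ℝ × W}
    (hq : 0 < q.1) (hθ : θ ∈ Set.Ioo (-Real.pi) Real.pi) (h : t < θ) :
    {y ∈ Q | polarAngle y.1.1 y.1.2 ≤ t}.indicator f (cylPoint θ q) = 0 := by
  have hang : polarAngle (cylPoint θ q).1.1 (cylPoint θ q).1.2 = θ :=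
    polarAngle_mul_cos_mul_sin hq hθ
  refine Set.indicator_of_notMem (fun h' => ?_) _
  exact absurd (hang.symm.trans_le h'.2) (not_le.2 h)

variable [NormedAddCommGroup W]

lemma continuous_cylPoint : Continuous fun p : ℝ × (ℝ × W) => cylPoint p.1 p.2 := by
  unfold cylPoint
  fun_prop

lemma norm_mul_cylPoint_le {F : (ℝ × ℝ) × W → ℝ} {R B : ℝ} (hB : ∀ y, |F y| ≤ B)
    (hR : ∀ y, F y ≠ 0 → ‖y‖ ≤ R) (θ : ℝ) {q : ℝ × W} (hq : 0 ≤ q.1) :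
    ‖q.1 * F (cylPoint θ q)‖ ≤ (Set.Icc 0 (2 * R) ×ˢ Metric.closedBall (0 : W) R).indicator
      (fun _ => 2 * R * B) q := by
  by_cases h0 : F (cylPoint θ q) = 0
  · rw [h0, mul_zero, norm_zero]
    refine Set.indicator_nonneg (fun q hq => ?_) _
    have := hq.1.1.trans hq.1.2
    have := (abs_nonneg _).trans (hB 0)
    positivity
  · have h := hR _ h0
    have h1 : |q.1 * Real.cos θ| ≤ R := (norm_fst_le _).trans ((norm_fst_le _).trans h)
    have h2 : |q.1 * Real.sin θ| ≤ R := (norm_snd_le _).trans ((norm_fst_le _).trans h)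
    have h3 : ‖q.2‖ ≤ R := (norm_snd_le (cylPoint θ q)).trans h
    have hR0 : 0 ≤ R := (norm_nonneg _).trans h
    have h4 : q.1 ≤ 2 * R := by
      refine abs_le_of_sq_le_sq' ?_ (by positivity) |>.2
      have e : q.1 ^ 2 = (q.1 * Real.cos θ) ^ 2 + (q.1 * Real.sin θ) ^ 2 := by
        linear_combination - q.1 ^ 2 * Real.sin_sq_add_cos_sq θ
      have := sq_le_sq' (abs_le.1 h1).1 (abs_le.1 h1).2
      have := sq_le_sq' (abs_le.1 h2).1 (abs_le.1 h2).2
      nlinarith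
    rw [Set.indicator_of_mem (by exact ⟨⟨hq, h4⟩, by simpa using h3⟩), norm_mul,
      Real.norm_of_nonneg hq]
    exact mul_le_mul h4 (hB _) (abs_nonneg _) (by positivity)

variable [NormedSpace ℝ W] [FiniteDimensional ℝ W] [MeasurableSpace W] (ν : Measure W)

/-- The measure on the half-space of pairs `(r, z)` with `0 < r`. -/
def halfMeasure : Measure (ℝ × W) := ((volume : Measure ℝ).restrict (Set.Ioi 0)).prod ν

variable [ν.IsAddHaarMeasure]

lemma halfMeasure_eq_restrict :
    halfMeasure ν = ((volume : Measure ℝ).prod ν).restrict (Set.Ioi 0 ×ˢ Set.univ) := by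
  rw [← Measure.prod_restrict, Measure.restrict_univ]; rfl

lemma ae_halfMeasure_pos : ∀ᵐ q ∂(halfMeasure ν), 0 < q.1 := by
  rw [halfMeasure_eq_restrict]
  filter_upwards [ae_restrict_mem (measurableSet_Ioi.prod MeasurableSet.univ)] with q hq
  exact hq.1

/-- Integration in cylindrical coordinates. -/
lemma integral_cyl {F : (ℝ × ℝ) × W → ℝ} (hF : Integrable F (volume.prod ν))
    (hF' : Integrable (fun p : ℝ × (ℝ × W) => p.2.1 * F (cylPoint p.1 p.2))
      (((volume : Measure ℝ).restrict (Set.Ioo (-Real.pi) Real.pi)).prod (halfMeasure ν))) :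
    ∫ y, F y ∂(volume.prod ν) = ∫ θ in Set.Ioo (-Real.pi) Real.pi,
      ∫ q, q.1 * F (cylPoint θ q) ∂(halfMeasure ν) := by
  have : SFinite (halfMeasure ν) := by unfold halfMeasure; infer_instance
  rw [integral_prod_symm _ hF]
  have hT : (volume : Measure (ℝ × ℝ)).restrict polarCoord.target =
      ((volume : Measure ℝ).restrict (Set.Ioi 0)).prod
        ((volume : Measure ℝ).restrict (Set.Ioo (-Real.pi) Real.pi)) := by
    rw [Measure.prod_restrict]; rfl
  have hmp : MeasurePreserving
      ((MeasurableEquiv.prodComm.prodCongr (MeasurableEquiv.refl W)).trans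
        MeasurableEquiv.prodAssoc)
      (((volume : Measure (ℝ × ℝ)).restrict polarCoord.target).prod ν)
      (((volume : Measure ℝ).restrict (Set.Ioo (-Real.pi) Real.pi)).prod (halfMeasure ν)) := by
    rw [hT]
    exact (measurePreserving_prodAssoc _ _ _).comp
      (Measure.measurePreserving_swap.prod (MeasurePreserving.id ν))
  simp_rw [← integral_comp_polarCoord_symm (fun p => F (p, _))]
  have hi := (hmp.integrable_comp_emb (MeasurableEquiv.measurableEmbedding _)).2 hF'
  have h1 := integral_prod_symm _ hi
  have h2 := hmp.integral_comp' (fun p : ℝ × (ℝ × W) => p.2.1 * F (cylPoint p.1 p.2))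
  rw [integral_prod _ hF'] at h2
  exact h1.symm.trans h2

variable [BorelSpace W]

lemma integrable_cylPoint_bound (R B : ℝ) :
    Integrable (fun q : ℝ × W => (Set.Icc 0 (2 * R) ×ˢ Metric.closedBall (0 : W) R).indicator
      (fun _ => 2 * R * B) q) (halfMeasure ν) := by
  have : IsFiniteMeasureOnCompacts (halfMeasure ν) := by unfold halfMeasure; infer_instance
  rw [integrable_indicator_iff (measurableSet_Icc.prod Metric.isClosed_closedBall.measurableSet)]
  exact integrableOn_const
    (IsCompact.prod isCompact_Icc (isCompact_closedBall _ _)).measure_lt_top.ne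

lemma integrable_mul_cylPoint {F : (ℝ × ℝ) × W → ℝ} (hF : Measurable F) {R B : ℝ}
    (hB : ∀ y, |F y| ≤ B) (hR : ∀ y, F y ≠ 0 → ‖y‖ ≤ R) :
    Integrable (fun p : ℝ × (ℝ × W) => p.2.1 * F (cylPoint p.1 p.2))
      (((volume : Measure ℝ).restrict (Set.Ioo (-Real.pi) Real.pi)).prod (halfMeasure ν)) := by
  have : SFinite (halfMeasure ν) := by unfold halfMeasure; infer_instance
  have hm : Measurable fun p : ℝ × (ℝ × W) => p.2.1 * F (cylPoint p.1 p.2) := by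
    have := hF.comp (continuous_cylPoint (W := W)).measurable
    exact (by fun_prop : Measurable fun p : ℝ × (ℝ × W) => p.2.1).mul this
  refine ((integrable_cylPoint_bound ν R B).comp_snd
    ((volume : Measure ℝ).restrict (Set.Ioo (-Real.pi) Real.pi))).mono'
    hm.aestronglyMeasurable ?_
  have h := Measure.quasiMeasurePreserving_snd
    (μ := (volume : Measure ℝ).restrict (Set.Ioo (-Real.pi) Real.pi)) (ν := halfMeasure ν)
  filter_upwards [h.ae (ae_halfMeasure_pos ν)] with p hp
  exact norm_mul_cylPoint_le hB hR p.1 hp.le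

/-- Sweeping a half-hyperplane around an axis: the derivative of the integral of `f` over the part
of `Q` below the half-hyperplane is the integral of `r f` over the slice. -/
lemma hasDerivAt_integral_hinge {Q : Set ((ℝ × ℝ) × W)} (hQ : MeasurableSet Q)
    {f : (ℝ × ℝ) × W → ℝ} (hf : Continuous f) {δ : ℝ} (hδ : 0 < δ)
    (hbdd : Bornology.IsBounded {y ∈ Q | polarAngle y.1.1 y.1.2 ≤ δ})
    (hae : ∀ᵐ q ∂(halfMeasure ν), ∀ᶠ θ in nhds (0 : ℝ), cylPoint θ q ∈ Q ↔ cylPoint 0 q ∈ Q) :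
    HasDerivAt
      (fun t => ∫ y in {y ∈ Q | polarAngle y.1.1 y.1.2 ∈ Set.Icc (-Real.pi) t}, f y
        ∂(volume.prod ν))
      (∫ q in {q | cylPoint 0 q ∈ Q}, q.1 * f (cylPoint 0 q) ∂(halfMeasure ν)) 0 := by
  have : SFinite (halfMeasure ν) := by unfold halfMeasure; infer_instance
  have hang : Measurable fun y : (ℝ × ℝ) × W => polarAngle y.1.1 y.1.2 :=
    measurable_polarAngle_s5.comp measurable_fst
  obtain ⟨R, hR⟩ := hbdd.subset_closedBall 0
  obtain ⟨B, hB⟩ := (isCompact_closedBall (0 : (ℝ × ℝ) × W) R).exists_bound_of_continuousOn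
    hf.continuousOn
  -- indicator functions of truncations are bounded with bounded support
  have key : ∀ t ≤ δ, ∃ hS : MeasurableSet {y ∈ Q | polarAngle y.1.1 y.1.2 ≤ t},
      Measurable ({y ∈ Q | polarAngle y.1.1 y.1.2 ≤ t}.indicator f) ∧
      (∀ y, |{y ∈ Q | polarAngle y.1.1 y.1.2 ≤ t}.indicator f y| ≤ |B|) ∧
      (∀ y, {y ∈ Q | polarAngle y.1.1 y.1.2 ≤ t}.indicator f y ≠ 0 → ‖y‖ ≤ R) := by
    intro t ht
    have hS : MeasurableSet {y ∈ Q | polarAngle y.1.1 y.1.2 ≤ t} :=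
      hQ.inter (hang measurableSet_Iic)
    have hsub : ∀ y ∈ {y ∈ Q | polarAngle y.1.1 y.1.2 ≤ t}, y ∈ Metric.closedBall 0 R :=
      fun y hy => hR ⟨hy.1, hy.2.trans ht⟩
    refine ⟨hS, hf.measurable.indicator hS, fun y => ?_, fun y hy => ?_⟩
    · by_cases hy : y ∈ {y ∈ Q | polarAngle y.1.1 y.1.2 ≤ t}
      · rw [Set.indicator_of_mem hy]
        exact (hB y (hsub y hy)).trans (le_abs_self B)
      · rw [Set.indicator_of_notMem hy]; simp
    · simpa using hsub y (Set.mem_of_indicator_ne_zero hy)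
  obtain ⟨hSδ, hFm, hFB, hFR⟩ := key δ le_rfl
  set F := {y ∈ Q | polarAngle y.1.1 y.1.2 ≤ δ}.indicator f with hFdef
  set g : ℝ → ℝ := fun θ => ∫ q, q.1 * F (cylPoint θ q) ∂(halfMeasure ν) with hg
  have hHint := integrable_mul_cylPoint ν hFm hFB hFR
  have hgint : Integrable g (volume.restrict (Set.Ioo (-Real.pi) Real.pi)) :=
    hHint.integral_prod_left
  -- continuity of the slice integrals
  have hgc : ContinuousAt g 0 := by
    refine continuousAt_of_dominated (Filter.Eventually.of_forall fun θ => ?_)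
      (Filter.Eventually.of_forall fun θ => ?_) (integrable_cylPoint_bound ν R |B|) ?_
    · have : Measurable fun q : ℝ × W => cylPoint θ q := by
        unfold cylPoint; fun_prop
      exact (measurable_fst.mul (hFm.comp this)).aestronglyMeasurable
    · filter_upwards [ae_halfMeasure_pos ν] with q hq
      exact norm_mul_cylPoint_le hFB hFR θ hq.le
    · filter_upwards [ae_halfMeasure_pos ν, hae] with q hq hq'
      have hcy : Continuous fun θ : ℝ => cylPoint θ q := by
        unfold cylPoint; fun_prop
      have hnear : ∀ᶠ θ in nhds (0 : ℝ), θ < δ ∧ θ ∈ Set.Ioo (-Real.pi) Real.pi :=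
        (eventually_lt_nhds hδ).and
          (Ioo_mem_nhds (neg_neg_of_pos Real.pi_pos) Real.pi_pos)
      have hiff : ∀ᶠ θ in nhds (0 : ℝ), F (cylPoint θ q) =
          Set.indicator {θ | cylPoint 0 q ∈ Q} (fun θ => f (cylPoint θ q)) θ := by
        filter_upwards [hnear, hq'] with θ h1 h2
        rw [hFdef, indicator_cylPoint_of_le Q f hq h1.2 h1.1.le]
        by_cases h : cylPoint 0 q ∈ Q
        · rw [Set.indicator_of_mem (h2.2 h), Set.indicator_of_mem (by exact h)]
        · rw [Set.indicator_of_notMem (fun h' => h (h2.1 h')), Set.indicator_of_notMem (by exact h)]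
      have hc : ContinuousAt (fun θ => q.1 * Set.indicator {θ | cylPoint 0 q ∈ Q}
          (fun θ => f (cylPoint θ q)) θ) 0 := by
        refine (Continuous.mul continuous_const ?_).continuousAt
        by_cases h : cylPoint 0 q ∈ Q
        · simpa [h, Function.comp_def] using hf.comp hcy
        · simpa [h] using continuous_const
      refine hc.congr ?_
      filter_upwards [hiff] with θ h
      rw [h]
  have hg0 : g 0 = ∫ q in {q | cylPoint 0 q ∈ Q}, q.1 * f (cylPoint 0 q) ∂(halfMeasure ν) := by
    have hm0 : MeasurableSet {q : ℝ × W | cylPoint 0 q ∈ Q} := by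
      have : Measurable fun q : ℝ × W => cylPoint 0 q := by
        unfold cylPoint; fun_prop
      exact this hQ
    rw [← integral_indicator hm0]
    refine integral_congr_ae ?_
    filter_upwards [ae_halfMeasure_pos ν] with q hq
    rw [hFdef, indicator_cylPoint_of_le Q f hq ⟨neg_neg_of_pos Real.pi_pos, Real.pi_pos⟩ hδ.le]
    simp [Set.indicator]
  rw [← hg0]
  -- the truncated integrals are primitives of the slice integrals
  have hprim : ∀ᶠ t in nhds (0 : ℝ),
      ∫ y in {y ∈ Q | polarAngle y.1.1 y.1.2 ∈ Set.Icc (-Real.pi) t}, f y ∂(volume.prod ν) =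
        ∫ θ in (-Real.pi)..t, g θ := by
    filter_upwards [eventually_lt_nhds hδ,
      Ioo_mem_nhds (neg_neg_of_pos Real.pi_pos) Real.pi_pos] with t htδ ht
    have hset : {y ∈ Q | polarAngle y.1.1 y.1.2 ∈ Set.Icc (-Real.pi) t} =
        {y ∈ Q | polarAngle y.1.1 y.1.2 ≤ t} := by
      ext y
      simp [polarAngle_neg_pi_le]
    obtain ⟨hS, hm, hb, hr⟩ := key t htδ.le
    rw [hset, ← integral_indicator hS, integral_cyl ν ?_ (integrable_mul_cylPoint ν hm hb hr)]
    · have hIoc : ∫ θ in (-Real.pi)..t, g θ = ∫ θ in Set.Ioo (-Real.pi) Real.pi,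
          (Set.Iic t).indicator g θ := by
        rw [intervalIntegral.integral_of_le ht.1.le, setIntegral_indicator measurableSet_Iic]
        congr 2
        ext θ
        simp only [Set.mem_Ioc, Set.mem_inter_iff, Set.mem_Ioo, Set.mem_Iic]
        have := ht.2
        constructor
        · rintro ⟨h1, h2⟩; exact ⟨⟨h1, h2.trans_lt this⟩, h2⟩
        · rintro ⟨⟨h1, _⟩, h2⟩; exact ⟨h1, h2⟩
      rw [hIoc]
      refine setIntegral_congr_fun measurableSet_Ioo fun θ hθ => ?_
      have hval : ∀ᵐ q ∂(halfMeasure ν),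
          q.1 * {y ∈ Q | polarAngle y.1.1 y.1.2 ≤ t}.indicator f (cylPoint θ q) =
            (Set.Iic t).indicator (fun θ => q.1 * F (cylPoint θ q)) θ := by
        filter_upwards [ae_halfMeasure_pos ν] with q hq
        rcases le_or_gt θ t with hθt | hθt
        · rw [Set.indicator_of_mem (Set.mem_Iic.2 hθt), hFdef,
            indicator_cylPoint_of_le Q f hq hθ hθt,
            indicator_cylPoint_of_le Q f hq hθ (hθt.trans htδ.le)]
        · rw [Set.indicator_of_notMem (s := Set.Iic t) (by simpa using hθt),
            indicator_cylPoint_of_lt Q f hq hθ hθt, mul_zero]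
      rw [integral_congr_ae hval]
      by_cases hθt : θ ≤ t
      · simp [Set.indicator, hθt, hg]
      · simp [Set.indicator, hθt]
    · rw [integrable_indicator_iff hS]
      have hsub : {y ∈ Q | polarAngle y.1.1 y.1.2 ≤ t} ⊆ Metric.closedBall 0 R :=
        fun y hy => hR ⟨hy.1, hy.2.trans htδ.le⟩
      exact (hf.continuousOn.integrableOn_compact (isCompact_closedBall _ _)).mono_set hsub
  refine HasDerivAt.congr_of_eventuallyEq ?_ hprim
  refine intervalIntegral.integral_hasDerivAt_right ?_ ?_ hgc
  · rw [intervalIntegrable_iff_integrableOn_Ioc_of_le (neg_nonpos.2 Real.pi_pos.le)]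
    exact IntegrableOn.mono_set hgint fun θ hθ => ⟨hθ.1, hθ.2.trans_lt Real.pi_pos⟩
  · exact ⟨Set.Ioo (-Real.pi) Real.pi,
      Ioo_mem_nhds (neg_neg_of_pos Real.pi_pos) Real.pi_pos, hgint.aestronglyMeasurable⟩

end Hinge

lemma hasDerivAt_det_of_eq_one {n : Type*} [Fintype n] [DecidableEq n] {A : ℝ → Matrix n n ℝ}
    {A' : Matrix n n ℝ} {t : ℝ} (hA : ∀ i j, HasDerivAt (fun s => A s i j) (A' i j) t)
    (h1 : A t = 1) : HasDerivAt (fun s => (A s).det) A'.trace t := by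
  have h := HasDerivAt.fun_sum (u := (Finset.univ : Finset (Equiv.Perm n)))
    (A := fun σ s => ((Equiv.Perm.sign σ : ℤ) : ℝ) * ∏ i, A s (σ i) i) (x := t)
    fun σ _ => (HasDerivAt.fun_finsetProd (u := Finset.univ)
      fun i _ => hA (σ i) i).const_mul ((Equiv.Perm.sign σ : ℤ) : ℝ)
  simp_rw [Matrix.det_apply']
  refine h.congr_deriv ?_
  rw [Finset.sum_eq_single 1]
  · simp [h1, Matrix.trace]
  · intro σ _ hσ
    rw [h1]
    refine mul_eq_zero_of_right _ (Finset.sum_eq_zero fun i _ => ?_)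
    obtain ⟨j, hji, hj⟩ : ∃ j, j ≠ i ∧ σ j ≠ j := by
      obtain ⟨j, hj⟩ : ∃ j, σ j ≠ j := by
        by_contra! h
        exact hσ (Equiv.ext h)
      rcases eq_or_ne j i with rfl | hne
      · exact ⟨σ j, hj, fun h => hj (σ.injective h)⟩
      · exact ⟨j, hne, hj⟩
    rw [Finset.prod_eq_zero (f := fun j => (1 : Matrix n n ℝ) (σ j) j)
      (Finset.mem_erase.2 ⟨hji, Finset.mem_univ j⟩) (Matrix.one_apply_ne hj), zero_smul]
  · simp

lemma centroid_apply {d : ℕ} {S : Set (Euc d)} (hS : IntegrableOn (fun x : Euc d => x) S)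
    (i : Fin d) : centroid S i = (volume S).toReal⁻¹ * ∫ x in S, x i := by
  have h := (EuclideanSpace.proj (𝕜 := ℝ) i).integral_comp_comm hS
  rw [_root_.centroid]
  change _ * (EuclideanSpace.proj (𝕜 := ℝ) i (∫ x in S, x)) = _
  rw [← h]
  rfl

/-- The covariance matrix as second moments minus products of first moments. -/
lemma covMatrix_apply {d : ℕ} {S : Set (Euc d)} (hS : IntegrableOn (fun x : Euc d => x) S)
    (hSf : ∀ f : Euc d → ℝ, Continuous f → IntegrableOn f S) (i j : Fin d) :
    covMatrix S i j = (volume S).toReal⁻¹ * (∫ x in S, x i * x j) -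
      ((volume S).toReal⁻¹ * ∫ x in S, x i) * ((volume S).toReal⁻¹ * ∫ x in S, x j) := by
  rw [covMatrix, Matrix.of_apply, centroid_apply hS, centroid_apply hS]
  have hv : ∫ _ in S, (1 : ℝ) = (volume S).toReal := by simp [Measure.real]
  set v := (volume S).toReal
  set p := v⁻¹ * ∫ x in S, x i with hp
  set q := v⁻¹ * ∫ x in S, x j with hq
  have h2 : IntegrableOn (fun x : Euc d => x i * x j) S := hSf _ (by fun_prop)
  have hi : IntegrableOn (fun x : Euc d => q * x i) S := hSf _ (by fun_prop)
  have hj : IntegrableOn (fun x : Euc d => p * x j) S := hSf _ (by fun_prop)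
  have h0 : IntegrableOn (fun _ : Euc d => p * q * 1) S := hSf _ (by fun_prop)
  have e : ∀ x : Euc d, (x i - p) * (x j - q) =
      x i * x j - q * x i - p * x j + p * q * 1 := fun x => by ring
  have hI : ∫ x in S, (x i - p) * (x j - q) =
      (∫ x in S, x i * x j) - q * (∫ x in S, x i) - p * (∫ x in S, x j) + p * q * v := by
    simp_rw [e]
    rw [integral_add (by exact (h2.sub hi).sub hj) h0, integral_sub (by exact h2.sub hi) hj, integral_sub h2 hi,
      integral_const_mul, integral_const_mul, integral_const_mul, hv]
  rw [hI]
  rcases eq_or_ne v 0 with hv0 | hv0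
  · simp [hp, hq, hv0]
  · rw [hp, hq]
    field_simp
    ring

/-- First variation of `det A(S) / vol(S)²` at an isotropic set, in terms of the first
variations `D` of integrals of continuous functions. -/
lemma hasDerivAt_det_covMatrix_div {d : ℕ} {S : ℝ → Set (Euc d)} (hiso : IsIsotropic (S 0))
    (hvol : (volume (S 0)).toReal ≠ 0)
    (hid : ∀ᶠ t in nhds 0, IntegrableOn (fun x : Euc d => x) (S t))
    (hint : ∀ᶠ t in nhds 0, ∀ f : Euc d → ℝ, Continuous f → IntegrableOn f (S t))
    {D : (Euc d → ℝ) → ℝ}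
    (hD : ∀ f : Euc d → ℝ, Continuous f → HasDerivAt (fun t => ∫ x in S t, f x) (D f) 0) :
    HasDerivAt (fun t => (volume (S t)).toReal) (D fun _ => 1) 0 ∧
    HasDerivAt (fun t => (covMatrix (S t)).det / (volume (S t)).toReal ^ 2)
      (((∑ i, D fun x => x i * x i) - (d + 2) * D fun _ => 1) / (volume (S 0)).toReal ^ 3) 0 := by
  have hv : HasDerivAt (fun t => (volume (S t)).toReal) (D fun _ => 1) 0 := by
    have h := hD (fun _ => 1) continuous_const
    simpa [Measure.real] using h
  refine ⟨hv, ?_⟩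
  have hid0 := hid.self_of_nhds
  have hint0 := hint.self_of_nhds
  have hm0 : ∀ i, ∫ x in S 0, x i = 0 := fun i => by
    have h := centroid_apply hid0 i
    rw [hiso.1] at h
    simpa [hvol] using h.symm
  have hM0 : ∀ i j, (volume (S 0)).toReal⁻¹ * (∫ x in S 0, x i * x j) =
      (1 : Matrix (Fin d) (Fin d) ℝ) i j := fun i j => by
    have h := covMatrix_apply hid0 hint0 i j
    rw [hiso.2, hm0, hm0] at h
    simpa using h.symm
  have hinv := hv.inv hvol
  set V := D fun _ => 1
  set v := (volume (S 0)).toReal with hvdef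
  have hA : ∀ i j, HasDerivAt (fun t => covMatrix (S t) i j)
      ((Matrix.of fun i j => v⁻¹ * D (fun x => x i * x j) -
        V / v * (1 : Matrix (Fin d) (Fin d) ℝ) i j) i j) 0 := by
    intro i j
    have h2 := hinv.mul (hD (fun x => x i * x j) (by fun_prop))
    have hi := hinv.mul (hD (fun x => x i) (by fun_prop))
    have hj := hinv.mul (hD (fun x => x j) (by fun_prop))
    have h := h2.sub (hi.mul hj)
    refine (h.congr_deriv ?_).congr_of_eventuallyEq ?_
    · simp only [Matrix.of_apply, Pi.inv_apply, ← hM0 i j, Pi.mul_apply, hm0, ← hvdef]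
      field_simp
      ring
    · filter_upwards [hid, hint] with t ht ht'
      rw [covMatrix_apply ht ht' i j]
      rfl
  have hdet := hasDerivAt_det_of_eq_one hA hiso.2
  have h := hdet.div (hv.pow 2) (pow_ne_zero 2 hvol)
  refine h.congr_deriv ?_
  simp only [hiso.2, Matrix.det_one, Matrix.trace, Matrix.diag, Matrix.of_apply, Pi.pow_apply,
    Matrix.one_apply_eq, Finset.sum_sub_distrib, ← Finset.mul_sum, ← hvdef]
  rw [Finset.sum_const, Finset.card_univ, Fintype.card_fin, nsmul_eq_mul]
  push_cast
  field_simp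
  ring

section Geometry

variable {E : Type*} [NormedAddCommGroup E] [InnerProductSpace ℝ E]

/-- Relaxing a facet of a bounded polyhedron and opening by a small angle around an axis through
`o` keeps it bounded. -/
lemma exists_isBounded_polarAngle_le [FiniteDimensional ℝ E] {P K : Set E} {o u w : E}
    (hPcl : IsClosed P) (hPconv : Convex ℝ P) (hK : Bornology.IsBounded K)
    (hPK : ∀ x ∈ P, ⟪x - o, w⟫ ≤ 0 → x ∈ K) (ho : o ∈ P) (hun : ‖u‖ = 1) (hwn : ‖w‖ = 1) :
    ∃ δ > 0, Bornology.IsBounded {x ∈ P | polarAngle ⟪x - o, u⟫ ⟪x - o, w⟫ ≤ δ} := by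
  obtain ⟨R, hR0, hR⟩ := hK.subset_ball_lt 0 o
  have hcont : Continuous fun x : E => ⟪x - o, w⟫ := by fun_prop
  have hC : IsCompact (Metric.sphere o R ∩ (P ∩ {x | 0 ≤ ⟪x - o, w⟫})) :=
    (isCompact_sphere o R).inter_right (hPcl.inter (isClosed_le continuous_const hcont))
  have hpos : ∀ x ∈ Metric.sphere o R ∩ (P ∩ {x | 0 ≤ ⟪x - o, w⟫}), 0 < ⟪x - o, w⟫ := by
    rintro x ⟨hxR, hxP, _⟩
    by_contra! hle
    have := hR (hPK x hxP hle)
    rw [Metric.mem_sphere] at hxR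
    rw [Metric.mem_ball] at this
    linarith
  obtain ⟨β, hβ, hCβ⟩ : ∃ β > 0, ∀ x ∈ Metric.sphere o R ∩ (P ∩ {x | 0 ≤ ⟪x - o, w⟫}),
      β ≤ ⟪x - o, w⟫ := by
    rcases Set.eq_empty_or_nonempty (Metric.sphere o R ∩ (P ∩ {x | 0 ≤ ⟪x - o, w⟫}))
      with hemp | hne
    · exact ⟨1, one_pos, by simp [hemp]⟩
    · obtain ⟨x, hx, hmin⟩ := hC.exists_isMinOn hne hcont.continuousOn
      exact ⟨_, hpos x hx, fun y hy => hmin hy⟩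
  refine ⟨β / (4 * R), by positivity, Metric.isBounded_closedBall (x := o) (r := R) |>.subset ?_⟩
  rintro x ⟨hxP, hxθ⟩
  rw [Metric.mem_closedBall, dist_eq_norm]
  by_contra! hfar
  have hb : 0 < ⟪x - o, w⟫ := by
    by_contra! hle
    have := hR (hPK x hxP hle)
    rw [Metric.mem_ball, dist_eq_norm] at this
    linarith
  have hθ0 : 0 < polarAngle ⟪x - o, u⟫ ⟪x - o, w⟫ := by
    by_contra! hle
    exact absurd ((polarAngle_nonpos_iff _ _).1 hle) (not_le.2 hb)
  have hn : 0 < ‖x - o‖ := hR0.trans hfar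
  set s := R / ‖x - o‖ with hs
  have hs0 : 0 < s := by positivity
  have hs1 : s ≤ 1 := (div_le_one hn).2 hfar.le
  set y := o + s • (x - o) with hy
  have hyo : y - o = s • (x - o) := by simp [hy]
  have hyR : ‖y - o‖ = R := by
    rw [hyo, norm_smul, Real.norm_of_nonneg hs0.le, hs]
    field_simp
  have hyP : y ∈ P := hPconv.add_smul_sub_mem ho hxP ⟨hs0.le, hs1⟩
  have hyw : ⟪y - o, w⟫ = s * ⟪x - o, w⟫ := by rw [hyo, real_inner_smul_left]
  have hyu : ⟪y - o, u⟫ = s * ⟪x - o, u⟫ := by rw [hyo, real_inner_smul_left]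
  have hyb : 0 < ⟪y - o, w⟫ := by rw [hyw]; positivity
  have h1 := hCβ y ⟨by rw [Metric.mem_sphere, dist_eq_norm, hyR], hyP, hyb.le⟩
  have h2 := sqrt_mul_sin_polarAngle ⟪y - o, u⟫ ⟪y - o, w⟫
  have hyθ : polarAngle ⟪y - o, u⟫ ⟪y - o, w⟫ = polarAngle ⟪x - o, u⟫ ⟪x - o, w⟫ := by
    rw [hyu, hyw, polarAngle_mul hs0]
  have hu' : |⟪y - o, u⟫| ≤ R := by
    simpa [hyR, hun] using abs_real_inner_le_norm (y - o) u
  have hw' : |⟪y - o, w⟫| ≤ R := by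
    simpa [hyR, hwn] using abs_real_inner_le_norm (y - o) w
  have hρ : √(⟪y - o, u⟫ ^ 2 + ⟪y - o, w⟫ ^ 2) ≤ 2 * R := by
    rw [Real.sqrt_le_left (by positivity)]
    have := sq_le_sq' (abs_le.1 hu').1 (abs_le.1 hu').2
    have := sq_le_sq' (abs_le.1 hw').1 (abs_le.1 hw').2
    nlinarith
  have hsin : Real.sin (polarAngle ⟪y - o, u⟫ ⟪y - o, w⟫) ≤ β / (4 * R) := by
    rw [hyθ]
    exact (Real.sin_le hθ0.le).trans hxθ
  have h3 : √(⟪y - o, u⟫ ^ 2 + ⟪y - o, w⟫ ^ 2) *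
      Real.sin (polarAngle ⟪y - o, u⟫ ⟪y - o, w⟫) ≤ 2 * R * (β / (4 * R)) :=
    (mul_le_mul_of_nonneg_left hsin (Real.sqrt_nonneg _)).trans
      (mul_le_mul_of_nonneg_right hρ (by positivity))
  have h4 : 2 * R * (β / (4 * R)) = β / 2 := by field_simp; ring
  linarith

/-- Two normals of a hyperplane spanned by affinely independent points are proportional. -/
lemma exists_eq_smul_of_affineIndependent {d : ℕ} (v : Fin d → Euc d)
    (hv : AffineIndependent ℝ v) (hd : 0 < d) {n w : Euc d} (hw : w ≠ 0)
    (hvn : ∀ i j, ⟪n, v i - v j⟫ = 0) (hvw : ∀ i j, ⟪w, v i - v j⟫ = 0) :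
    ∃ l : ℝ, n = l • w := by
  obtain ⟨k, rfl⟩ : ∃ k, d = k + 1 := ⟨d - 1, by omega⟩
  have hfin := hv.finrank_vectorSpan (n := k) (by simp)
  have hmem : ∀ z : Euc (k + 1), (∀ i j, ⟪z, v i - v j⟫ = 0) →
      z ∈ (vectorSpan ℝ (Set.range v))ᗮ := by
    intro z hz
    have hle : vectorSpan ℝ (Set.range v) ≤ (ℝ ∙ z)ᗮ := by
      rw [vectorSpan_def, Submodule.span_le]
      rintro _ ⟨_, ⟨i, rfl⟩, _, ⟨j, rfl⟩, rfl⟩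
      exact Submodule.mem_orthogonal_singleton_iff_inner_right.2 (hz i j)
    rw [Submodule.mem_orthogonal']
    intro y hy
    exact Submodule.mem_orthogonal_singleton_iff_inner_right.1 (hle hy)
  have hone : Module.finrank ℝ (vectorSpan ℝ (Set.range v))ᗮ = 1 := by
    have := Submodule.finrank_add_finrank_orthogonal (vectorSpan ℝ (Set.range v))
    rw [hfin, finrank_euclideanSpace_fin] at this
    omega
  obtain ⟨l, hl⟩ := (finrank_eq_one_iff_of_nonzero'
    (⟨w, hmem w hvw⟩ : (vectorSpan ℝ (Set.range v))ᗮ) (by simpa using hw)).1 hone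
    ⟨n, hmem n hvn⟩
  exact ⟨l, by simpa using (congrArg Subtype.val hl).symm⟩

/-- A vector whose inner product is constant on the hyperplane through `o` orthogonal to `w` is
a multiple of `w`. -/
lemma exists_eq_smul_of_inner_eq_const {n o w : E} {c : ℝ}
    (h : ∀ x, ⟪x - o, w⟫ = 0 → ⟪n, x⟫ = c) : ∃ l : ℝ, n = l • w := by
  have ho : ⟪n, o⟫ = c := h o (by simp)
  have hmem : n ∈ (ℝ ∙ w)ᗮᗮ := by
    rw [Submodule.mem_orthogonal']
    intro y hy
    have := h (o + y) (by
      rw [add_sub_cancel_left]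
      exact Submodule.mem_orthogonal_singleton_iff_inner_left.1 hy)
    rw [inner_add_right, ho] at this
    linarith
  rw [Submodule.orthogonal_orthogonal] at hmem
  obtain ⟨l, hl⟩ := Submodule.mem_span_singleton.1 hmem
  exact ⟨l, hl.symm⟩

/-- A nonempty open set contained in a closed half-space meets the open half-space. -/
lemma exists_inner_neg_of_interior_nonempty {K : Set E} {o w : E} (hK : (interior K).Nonempty)
    (hle : ∀ x ∈ K, ⟪x - o, w⟫ ≤ 0) (hw : ‖w‖ = 1) : ∃ p ∈ K, ⟪p - o, w⟫ < 0 := by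
  obtain ⟨p, hp⟩ := hK
  obtain ⟨ε, hε, hball⟩ := Metric.isOpen_iff.1 isOpen_interior p hp
  refine ⟨p - (ε / 2) • w, interior_subset (hball ?_), ?_⟩
  · rw [Metric.mem_ball, dist_eq_norm, sub_sub_cancel_left, norm_neg, norm_smul, hw,
      Real.norm_of_nonneg (by positivity)]
    linarith
  · have h1 := hle p (interior_subset hp)
    have h2 : ⟪p - (ε / 2) • w - o, w⟫ = ⟪p - o, w⟫ - ε / 2 := by
      rw [sub_right_comm, inner_sub_left (p - o), real_inner_smul_left,
        real_inner_self_eq_norm_sq, hw]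
      ring
    rw [h2]
    linarith

/-- The level set of a nonconstant linear functional is null. -/
lemma measure_linearMap_eq_const {F : Type*} [NormedAddCommGroup F] [NormedSpace ℝ F]
    [FiniteDimensional ℝ F] [MeasurableSpace F] [BorelSpace F] (μ : Measure F)
    [μ.IsAddHaarMeasure] (l : F →ₗ[ℝ] ℝ) (c : ℝ) (h : ∃ x, l x ≠ c) : μ {x | l x = c} = 0 := by
  have e : {x | l x = c} = ((affineSpan ℝ {c}).comap l.toAffineMap : Set F) := by
    ext x
    simp
  rw [e]
  refine Measure.addHaar_affineSubspace μ _ fun htop => ?_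
  obtain ⟨x, hx⟩ := h
  have : x ∈ ((affineSpan ℝ {c}).comap l.toAffineMap : Set F) := by rw [htop]; trivial
  rw [← e] at this
  exact hx this

variable [FiniteDimensional ℝ E]

/-- The orthogonal decomposition of `E` into the plane of `u`, `w` and its complement. -/
lemma exists_planeEquiv {u w : E} (hun : ‖u‖ = 1) (hwn : ‖w‖ = 1) (huw : ⟪u, w⟫ = 0) :
    ∃ L : ((ℝ × ℝ) × (Submodule.span ℝ {u, w})ᗮ) ≃L[ℝ] E,
      ∀ y, L y = y.1.1 • u + y.1.2 • w + y.2 := by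
  have hwu : ⟪w, u⟫ = 0 := by rw [real_inner_comm, huw]
  have hmem : ∀ z, z ∈ (Submodule.span ℝ {u, w})ᗮ ↔ ⟪z, u⟫ = 0 ∧ ⟪z, w⟫ = 0 := by
    intro z
    rw [Submodule.span_insert, ← Submodule.inf_orthogonal, Submodule.mem_inf,
      Submodule.mem_orthogonal_singleton_iff_inner_left,
      Submodule.mem_orthogonal_singleton_iff_inner_left]
  let L : ((ℝ × ℝ) × (Submodule.span ℝ {u, w})ᗮ) →ₗ[ℝ] E :=
    LinearMap.coprod (LinearMap.coprod (LinearMap.toSpanSingleton ℝ E u)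
      (LinearMap.toSpanSingleton ℝ E w)) (Submodule.subtype _)
  have hL : ∀ y, L y = y.1.1 • u + y.1.2 • w + y.2 := fun y => by simp [L]
  have hinj : Function.Injective L := by
    rw [injective_iff_map_eq_zero]
    rintro ⟨⟨p, q⟩, z, hz⟩ h
    rw [hL] at h
    simp only at h
    obtain ⟨hzu, hzw⟩ := (hmem z).1 hz
    have hp : p = 0 := by
      simpa [inner_add_left, real_inner_smul_left, hun, hwu, hzu] using congrArg (⟪·, u⟫) h
    have hq : q = 0 := by
      simpa [inner_add_left, real_inner_smul_left, huw, hwn, hzw] using congrArg (⟪·, w⟫) h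
    subst hp hq
    simpa using h
  have hsurj : Function.Surjective L := by
    intro x
    refine ⟨((⟪x, u⟫, ⟪x, w⟫), ⟨x - ⟪x, u⟫ • u - ⟪x, w⟫ • w, (hmem _).2 ⟨?_, ?_⟩⟩), ?_⟩
    · simp [inner_sub_left, real_inner_smul_left, hun, hwu]
    · simp [inner_sub_left, real_inner_smul_left, huw, hwn]
    · rw [hL]
      simp
  exact ⟨(LinearEquiv.ofBijective L ⟨hinj, hsurj⟩).toContinuousLinearEquiv, hL⟩

end Geometry

section Transport

/-- Change of variables along an affine isomorphism, up to an unspecified nonzero constant. -/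
lemma exists_setIntegral_eq_mul_preimage {F G : Type*} [NormedAddCommGroup F] [NormedSpace ℝ F]
    [FiniteDimensional ℝ F] [MeasurableSpace F] [BorelSpace F]
    [NormedAddCommGroup G] [NormedSpace ℝ G] [MeasurableSpace G] [BorelSpace G]
    (μ : Measure F) [μ.IsAddHaarMeasure] (ν : Measure G) [ν.IsAddHaarMeasure]
    (L : G ≃L[ℝ] F) (o : F) :
    ∃ κ : ℝ, κ ≠ 0 ∧ ∀ (S : Set F) (f : F → ℝ),
      ∫ x in S, f x ∂μ = κ * ∫ y in {y | o + L y ∈ S}, f (o + L y) ∂ν := by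
  have h := Measure.isAddLeftInvariant_eq_smul μ (ν.map L)
  have hpos := Measure.addHaarScalarFactor_pos_of_isAddHaarMeasure μ (ν.map L)
  refine ⟨(μ.addHaarScalarFactor (ν.map L) : ℝ), by exact_mod_cast hpos.ne', fun S f => ?_⟩
  have hL : MeasurableEmbedding L := L.toHomeomorph.measurableEmbedding
  have ho : MeasurableEmbedding fun x : F => o + x := measurableEmbedding_addLeft o
  rw [← (measurePreserving_add_left μ o).setIntegral_preimage_emb ho]
  nth_rewrite 1 [h]
  rw [Measure.restrict_smul, integral_smul_nnreal_measure, hL.setIntegral_map]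
  rfl

/-- The Hausdorff measure on the image of an affine isometric embedding, in linear coordinates. -/
lemma exists_setIntegral_hausdorffMeasure_eq_mul_preimage {E F G : Type*}
    [NormedAddCommGroup E] [NormedSpace ℝ E] [MeasurableSpace E] [BorelSpace E]
    [NormedAddCommGroup F] [NormedSpace ℝ F]
    [FiniteDimensional ℝ F] [MeasurableSpace F] [BorelSpace F]
    [NormedAddCommGroup G] [NormedSpace ℝ G] [MeasurableSpace G] [BorelSpace G]
    (ν : Measure G) [ν.IsAddHaarMeasure] (g : F →ₗᵢ[ℝ] E) (L : G ≃L[ℝ] F) (o : E) :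
    ∃ κ : ℝ, κ ≠ 0 ∧ ∀ (S : Set E) (f : E → ℝ), S ⊆ Set.range (fun y => o + g y) →
      ∫ x in S, f x ∂(μH[Module.finrank ℝ F]) =
        κ * ∫ y in {y | o + g (L y) ∈ S}, f (o + g (L y)) ∂ν := by
  obtain ⟨κ, hκ, h⟩ := exists_setIntegral_eq_mul_preimage μH[Module.finrank ℝ F] ν L 0
  refine ⟨κ, hκ, fun S f hS => ?_⟩
  have hi : Isometry fun y => o + g y := (isometry_add_left o).comp g.isometry
  have hmap := hi.map_hausdorffMeasure (d := Module.finrank ℝ F) (Or.inl (Nat.cast_nonneg _))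
  have hemb : MeasurableEmbedding fun y => o + g y := hi.isClosedEmbedding.measurableEmbedding
  have hr : (μH[Module.finrank ℝ F] : Measure E).restrict S =
      ((μH[Module.finrank ℝ F] : Measure E).restrict (Set.range fun y => o + g y)).restrict S := by
    rw [Measure.restrict_restrict_of_subset hS]
  rw [hr, ← hmap, hemb.setIntegral_map, h]
  simp only [zero_add, Set.mem_preimage]

lemma hausdorffMeasure_lt_top_of_isBounded {E F : Type*}
    [NormedAddCommGroup E] [NormedSpace ℝ E] [MeasurableSpace E] [BorelSpace E]
    [NormedAddCommGroup F] [NormedSpace ℝ F]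
    [FiniteDimensional ℝ F] (g : F →ₗᵢ[ℝ] E) (o : E) {S : Set E}
    (hS : S ⊆ Set.range fun y => o + g y) (hb : Bornology.IsBounded S) :
    μH[Module.finrank ℝ F] S < ⊤ := by
  borelize F
  have hi : Isometry fun y => o + g y := (isometry_add_left o).comp g.isometry
  have hpre := hi.hausdorffMeasure_preimage (d := Module.finrank ℝ F)
    (Or.inl (Nat.cast_nonneg _)) S
  rw [Set.inter_eq_left.2 hS] at hpre
  rw [← hpre]
  exact (hi.antilipschitz.isBounded_preimage hb).measure_lt_top

variable {E : Type*} [NormedAddCommGroup E] [InnerProductSpace ℝ E]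

lemma exists_halfPlaneIsometry {u w : E} (hun : ‖u‖ = 1) :
    ∃ g : WithLp 2 (ℝ × (Submodule.span ℝ {u, w})ᗮ) →ₗᵢ[ℝ] E,
      ∀ y, g y = y.fst • u + y.snd := by
  let g : WithLp 2 (ℝ × (Submodule.span ℝ {u, w})ᗮ) →ₗ[ℝ] E :=
    (LinearMap.coprod (LinearMap.toSpanSingleton ℝ E u) (Submodule.subtype _)) ∘ₗ
      (WithLp.linearEquiv 2 ℝ _).toLinearMap
  have hg : ∀ y, g y = y.fst • u + y.snd := fun y => by simp [g]
  refine ⟨⟨g, fun y => ?_⟩, hg⟩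
  have hz : ⟪u, (y.snd : E)⟫ = 0 :=
    Submodule.inner_right_of_mem_orthogonal (Submodule.subset_span (by simp)) y.snd.2
  rw [hg, ← sq_eq_sq₀ (norm_nonneg _) (norm_nonneg _), WithLp.prod_norm_sq_eq_of_L2,
    norm_add_sq_real, real_inner_smul_left, hz, norm_smul, hun]
  simp

end Transport

section HingePolyhedron

variable {E : Type*} [NormedAddCommGroup E] [InnerProductSpace ℝ E]
  {ι : Type*} {s : Finset ι} {a : ι → E} {c : ι → ℝ} {o u w : E}

lemma inner_plane_fst (hun : ‖u‖ = 1) (huw : ⟪u, w⟫ = 0) (p q : ℝ)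
    (z : (Submodule.span ℝ {u, w})ᗮ) : ⟪p • u + q • w + (z : E), u⟫ = p := by
  have hz : ⟪(z : E), u⟫ = 0 :=
    Submodule.inner_left_of_mem_orthogonal (Submodule.subset_span (by simp)) z.2
  simp [inner_add_left, real_inner_smul_left, real_inner_comm u w, huw, hun, hz]

lemma inner_plane_snd (hwn : ‖w‖ = 1) (huw : ⟪u, w⟫ = 0) (p q : ℝ)
    (z : (Submodule.span ℝ {u, w})ᗮ) : ⟪p • u + q • w + (z : E), w⟫ = q := by
  have hz : ⟪(z : E), w⟫ = 0 :=
    Submodule.inner_left_of_mem_orthogonal (Submodule.subset_span (by simp)) z.2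
  simp [inner_add_left, real_inner_smul_left, huw, hwn, hz]

variable [FiniteDimensional ℝ E] [MeasurableSpace E] [BorelSpace E]

lemma ae_eventually_cylPoint_mem_iff {L : ((ℝ × ℝ) × (Submodule.span ℝ {u, w})ᗮ) ≃L[ℝ] E}
    (hL : ∀ y, L y = y.1.1 • u + y.1.2 • w + y.2) (hwn : ‖w‖ = 1) (huw : ⟪u, w⟫ = 0)
    (hs : ∀ j ∈ s, ∃ x, ⟪x - o, w⟫ = 0 ∧ ⟪a j, x⟫ ≠ c j) :
    ∀ᵐ q ∂(halfMeasure (volume : Measure (Submodule.span ℝ {u, w})ᗮ)), ∀ᶠ θ in nhds (0 : ℝ),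
      o + L (cylPoint θ q) ∈ ⋂ j ∈ s, {x | ⟪a j, x⟫ ≤ c j} ↔
        o + L (cylPoint 0 q) ∈ ⋂ j ∈ s, {x | ⟪a j, x⟫ ≤ c j} := by
  have hne : ∀ j ∈ s, ∀ᵐ q ∂(halfMeasure (volume : Measure (Submodule.span ℝ {u, w})ᗮ)),
      ⟪a j, o + L (cylPoint 0 q)⟫ ≠ c j := by
    intro j hj
    rw [halfMeasure_eq_restrict]
    refine ae_restrict_of_ae ?_
    let l : ℝ × (Submodule.span ℝ {u, w})ᗮ →ₗ[ℝ] ℝ := (innerₛₗ ℝ (a j)) ∘ₗ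
      (LinearMap.coprod (LinearMap.toSpanSingleton ℝ E u) (Submodule.subtype _))
    have hl : ∀ q, ⟪a j, o + L (cylPoint 0 q)⟫ = ⟪a j, o⟫ + l q := fun q => by
      simp [l, hL, cylPoint, inner_add_right]
    have hnull : (volume.prod volume) {q | l q = c j - ⟪a j, o⟫} = 0 := by
      refine measure_linearMap_eq_const _ l _ ?_
      obtain ⟨x, hxw, hx⟩ := hs j hj
      refine ⟨((L.symm (x - o)).1.1, (L.symm (x - o)).2), fun h => hx ?_⟩
      have e := hL (L.symm (x - o))
      rw [L.apply_symm_apply] at e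
      have h0 : (L.symm (x - o)).1.2 = 0 := by
        rwa [e, inner_plane_snd hwn huw] at hxw
      have h1 := hl ((L.symm (x - o)).1.1, (L.symm (x - o)).2)
      rw [h, hL] at h1
      simp only [cylPoint, Real.cos_zero, Real.sin_zero, mul_one, mul_zero] at h1
      rw [h0] at e
      rw [← e] at h1
      simpa using h1
    filter_upwards [compl_mem_ae_iff.2 hnull] with q hq h
    refine hq ?_
    rw [hl] at h
    simp only [Set.mem_ofPred_eq]
    linarith
  filter_upwards [(Finset.eventually_all s).2 hne] with q hq
  have hcont : ∀ j, Continuous fun θ => ⟪a j, o + L (cylPoint θ q)⟫ := by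
    intro j
    have : Continuous fun θ => cylPoint θ q :=
      continuous_cylPoint.comp (Continuous.prodMk_left q)
    fun_prop
  have hev : ∀ j ∈ s, ∀ᶠ θ in nhds (0 : ℝ),
      ⟪a j, o + L (cylPoint θ q)⟫ ≤ c j ↔ ⟪a j, o + L (cylPoint 0 q)⟫ ≤ c j := by
    intro j hj
    rcases lt_or_gt_of_ne (hq j hj) with h | h
    · filter_upwards [(hcont j).continuousAt.eventually_lt_const h] with θ hθ
      exact ⟨fun _ => h.le, fun _ => hθ.le⟩
    · filter_upwards [(hcont j).continuousAt.eventually_const_lt h] with θ hθ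
      exact ⟨fun h' => absurd h' hθ.not_ge, fun h' => absurd h' h.not_ge⟩
  filter_upwards [(Finset.eventually_all s).2 hev] with θ hθ
  simp only [Set.mem_iInter, Set.mem_ofPred_eq]
  exact forall₂_congr hθ

/-- The derivative of the integral over a hinged polyhedron, as an integral over the hinging
facet with respect to the Hausdorff measure, up to a constant. -/
lemma exists_hasDerivAt_integral_hinge (hun : ‖u‖ = 1) (hwn : ‖w‖ = 1) (huw : ⟪u, w⟫ = 0)
    (hs : ∀ j ∈ s, ∃ x, ⟪x - o, w⟫ = 0 ∧ ⟪a j, x⟫ ≠ c j)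
    {P : Set E} (hP : P = ⋂ j ∈ s, {x | ⟪a j, x⟫ ≤ c j}) {δ : ℝ} (hδ : 0 < δ)
    (hbdd : Bornology.IsBounded {x ∈ P | polarAngle ⟪x - o, u⟫ ⟪x - o, w⟫ ≤ δ}) :
    (μH[(Module.finrank ℝ E - 1 : ℝ)]
      {x ∈ P | polarAngle ⟪x - o, u⟫ ⟪x - o, w⟫ = 0} < ⊤) ∧
    ∃ κ : ℝ, ∀ f : E → ℝ, Continuous f → HasDerivAt
      (fun t => ∫ x in {x ∈ P | polarAngle ⟪x - o, u⟫ ⟪x - o, w⟫ ∈ Set.Icc (-Real.pi) t}, f x)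
      (κ * ∫ x in {x ∈ P | polarAngle ⟪x - o, u⟫ ⟪x - o, w⟫ = 0},
        f x * Real.sqrt (⟪x - o, u⟫ ^ 2 + ⟪x - o, w⟫ ^ 2)
          ∂(μH[(Module.finrank ℝ E - 1 : ℝ)])) 0 := by
  obtain ⟨L, hL⟩ := exists_planeEquiv hun hwn huw
  obtain ⟨g, hg⟩ := exists_halfPlaneIsometry (w := w) hun
  have hfin : (Module.finrank ℝ E - 1 : ℝ) =
      (Module.finrank ℝ (WithLp 2 (ℝ × (Submodule.span ℝ {u, w})ᗮ)) : ℝ) := by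
    have h1 := L.toLinearEquiv.finrank_eq
    have h2 := (WithLp.linearEquiv 2 ℝ (ℝ × (Submodule.span ℝ {u, w})ᗮ)).finrank_eq
    simp only [Module.finrank_prod, Module.finrank_self] at h1 h2
    rw [← h1, h2]
    push_cast
    ring
  rw [hfin]
  have hPcl : IsClosed P := by
    rw [hP]
    exact isClosed_biInter fun j _ => isClosed_le (by fun_prop) continuous_const
  have hsub : {x ∈ P | polarAngle ⟪x - o, u⟫ ⟪x - o, w⟫ = 0} ⊆
      Set.range fun y => o + g y := by
    rintro x ⟨-, hx⟩
    obtain ⟨-, hxw⟩ := (polarAngle_eq_zero_iff _ _).1 hx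
    have e := hL (L.symm (x - o))
    rw [L.apply_symm_apply] at e
    rw [e, inner_plane_snd hwn huw] at hxw
    refine ⟨WithLp.toLp 2 ((L.symm (x - o)).1.1, (L.symm (x - o)).2), ?_⟩
    rw [hxw, zero_smul, add_zero] at e
    simp only [hg]
    exact add_eq_of_eq_sub' e.symm
  have hSbdd : Bornology.IsBounded {x ∈ P | polarAngle ⟪x - o, u⟫ ⟪x - o, w⟫ = 0} :=
    hbdd.subset fun x hx => ⟨hx.1, hx.2.le.trans hδ.le⟩
  refine ⟨hausdorffMeasure_lt_top_of_isBounded g o hsub hSbdd, ?_⟩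
  obtain ⟨κ₁, -, h₁⟩ := exists_setIntegral_eq_mul_preimage (volume : Measure E)
    ((volume : Measure (ℝ × ℝ)).prod (volume : Measure (Submodule.span ℝ {u, w})ᗮ)) L o
  obtain ⟨κ₂, hκ₂, h₂⟩ := exists_setIntegral_hausdorffMeasure_eq_mul_preimage
    ((volume : Measure ℝ).prod (volume : Measure (Submodule.span ℝ {u, w})ᗮ)) g
    (WithLp.prodContinuousLinearEquiv 2 ℝ ℝ (Submodule.span ℝ {u, w})ᗮ).symm o
  have hgL : ∀ q, g ((WithLp.prodContinuousLinearEquiv 2 ℝ ℝ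
      (Submodule.span ℝ {u, w})ᗮ).symm q) = L (cylPoint 0 q) := by
    intro q
    rw [hg, hL]
    simp [cylPoint]
  have hLu : ∀ y, ⟪o + L y - o, u⟫ = y.1.1 := fun y => by
    rw [add_sub_cancel_left, hL, inner_plane_fst hun huw]
  have hLw : ∀ y, ⟪o + L y - o, w⟫ = y.1.2 := fun y => by
    rw [add_sub_cancel_left, hL, inner_plane_snd hwn huw]
  have hLc : Continuous fun y => o + L y := by fun_prop
  have hQm : MeasurableSet {y | o + L y ∈ P} := (hPcl.preimage hLc).measurableSet
  have hQb : Bornology.IsBounded {y ∈ {y | o + L y ∈ P} | polarAngle y.1.1 y.1.2 ≤ δ} := by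
    refine ((L.symm.lipschitz.comp (IsometryEquiv.subRight o).isometry.lipschitz).isBounded_image
      hbdd).subset ?_
    rintro y ⟨hy, hyδ⟩
    refine ⟨o + L y, ⟨hy, ?_⟩, ?_⟩
    · rwa [hLu, hLw]
    · simp
  have hae := ae_eventually_cylPoint_mem_iff hL hwn huw hs
  rw [← hP] at hae
  refine ⟨κ₁ / κ₂, fun f hf => ?_⟩
  have key := (hasDerivAt_integral_hinge volume hQm (hf.comp hLc) hδ hQb hae).const_mul κ₁
  have hslice : κ₂ * ∫ q in {q | cylPoint 0 q ∈ {y | o + L y ∈ P}},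
      q.1 * (f ∘ fun y => o + L y) (cylPoint 0 q)
        ∂(halfMeasure (volume : Measure (Submodule.span ℝ {u, w})ᗮ)) =
      ∫ x in {x ∈ P | polarAngle ⟪x - o, u⟫ ⟪x - o, w⟫ = 0},
        f x * Real.sqrt (⟪x - o, u⟫ ^ 2 + ⟪x - o, w⟫ ^ 2)
          ∂(μH[Module.finrank ℝ (WithLp 2 (ℝ × (Submodule.span ℝ {u, w})ᗮ))]) := by
    have hc0 : Continuous fun q : ℝ × (Submodule.span ℝ {u, w})ᗮ => cylPoint 0 q :=
      continuous_cylPoint.comp (Continuous.prodMk_right 0)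
    have hAm : MeasurableSet {q | cylPoint 0 q ∈ {y | o + L y ∈ P}} :=
      (hPcl.preimage (hLc.comp hc0)).measurableSet
    have hIm : MeasurableSet {q : ℝ × (Submodule.span ℝ {u, w})ᗮ | 0 ≤ q.1} :=
      (isClosed_le continuous_const continuous_fst).measurableSet
    have hset : {q | o + L (cylPoint 0 q) ∈ {x ∈ P | polarAngle ⟪x - o, u⟫ ⟪x - o, w⟫ = 0}} =
        {q | cylPoint 0 q ∈ {y | o + L y ∈ P}} ∩ {q | 0 ≤ q.1} := by
      ext q
      simp only [Set.mem_ofPred_eq, Set.mem_inter_iff, hLu, hLw, polarAngle_eq_zero_iff]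
      simp [cylPoint]
    rw [h₂ _ _ hsub, halfMeasure_eq_restrict, Measure.restrict_restrict hAm]
    simp only [hgL]
    rw [hset]
    congr 1
    trans ∫ q in {q | cylPoint 0 q ∈ {y | o + L y ∈ P}} ∩ {q | 0 ≤ q.1},
      q.1 * f (o + L (cylPoint 0 q)) ∂(volume.prod volume)
    · refine (setIntegral_eq_of_subset_of_forall_sdiff_eq_zero (hAm.inter hIm) ?_ ?_).symm
      · exact fun q hq => ⟨hq.1, show 0 ≤ q.1 from le_of_lt hq.2.1⟩
      · rintro q ⟨⟨hq, hq0⟩, hq'⟩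
        have : q.1 = 0 := le_antisymm
          (not_lt.1 fun h => hq' ⟨hq, h, Set.mem_univ _⟩) hq0
        rw [this, zero_mul]
    · refine setIntegral_congr_fun (hAm.inter hIm) ?_
      rintro q ⟨-, hq0⟩
      simp only [hLu, hLw, cylPoint, Real.cos_zero, Real.sin_zero, mul_one, mul_zero]
      rw [zero_pow two_ne_zero, add_zero, Real.sqrt_sq hq0, mul_comm]
  rw [← hslice, div_mul_eq_mul_div, mul_left_comm, mul_div_cancel_left₀ _ hκ₂]
  refine key.congr_of_eventuallyEq (Filter.Eventually.of_forall fun t => ?_)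
  simp only [h₁, Set.mem_ofPred_eq, hLu, hLw, Function.comp_apply]

end HingePolyhedron

section Conclusion

lemma inner_le_iff_of_eq_smul {E : Type*} [NormedAddCommGroup E] [InnerProductSpace ℝ E]
    {n o w p : E} {l c : ℝ} (hn : n = l • w) (hn0 : n ≠ 0) (ho : ⟪n, o⟫ = c) (hp : ⟪n, p⟫ ≤ c)
    (hpw : ⟪p - o, w⟫ < 0) (x : E) : ⟪n, x⟫ ≤ c ↔ ⟪x - o, w⟫ ≤ 0 := by
  have key : ∀ y, ⟪n, y⟫ - c = l * ⟪y - o, w⟫ := fun y => by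
    rw [← ho, hn, ← inner_sub_right, real_inner_smul_left, real_inner_comm]
  have hl0 : l ≠ 0 := by
    rintro rfl
    exact hn0 (by rw [hn, zero_smul])
  have hl : 0 < l := by
    refine lt_of_le_of_ne ?_ hl0.symm
    by_contra! h
    have := key p
    nlinarith [mul_pos_of_neg_of_neg h hpw]
  rw [← sub_nonpos, key, mul_nonpos_iff_pos_imp_nonpos]
  exact ⟨fun h => h.1 hl, fun h => ⟨fun _ => h, fun _ => by positivity⟩⟩

lemma integrableOn_of_continuous_of_isBounded {E : Type*} [NormedAddCommGroup E]
    [NormedSpace ℝ E] [FiniteDimensional ℝ E] [MeasurableSpace E] [BorelSpace E] {μ : Measure E}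
    {S : Set E} {f : E → ℝ} (hf : Continuous f) (hS : Bornology.IsBounded S) (hμ : μ S < ⊤) :
    IntegrableOn f S μ := by
  obtain ⟨C, hC⟩ := hS.isCompact_closure.exists_bound_of_continuousOn hf.continuousOn
  have : IsFiniteMeasure (μ.restrict S) := ⟨by simpa using hμ⟩
  refine Integrable.of_bound hf.aestronglyMeasurable C
    (ae_restrict_of_ae_restrict_of_subset subset_closure ?_)
  filter_upwards [ae_restrict_mem isClosed_closure.measurableSet] with x hx
  exact hC x hx

/-- Weighted integrals of `‖x‖²`, coordinate by coordinate. -/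
lemma sum_setIntegral_sq_mul {d : ℕ} {μ : Measure (Euc d)} {S : Set (Euc d)} {ρ : Euc d → ℝ}
    (hρ : Continuous ρ) (hS : Bornology.IsBounded S) (hμ : μ S < ⊤) :
    ∑ i, ∫ x in S, x i * x i * ρ x ∂μ = ∫ x in S, ‖x‖ ^ 2 * ρ x ∂μ := by
  rw [← integral_finsetSum _ fun i _ =>
    integrableOn_of_continuous_of_isBounded (by fun_prop) hS hμ]
  congr 1 with x
  rw [EuclideanSpace.real_norm_sq_eq, Finset.sum_mul]
  exact Finset.sum_congr rfl fun i _ => by ring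

end Conclusion

/-- Lemma: derivative with respect to hinging. Let `K` be an isotropic
simplicial polytope with irredundant H-representation `K = ∩ᵢ Hᵢ`, let `P` be the polyhedron
obtained by relaxing the halfspace of facet `i'`, and introduce cylindrical coordinates
`(ρ, θ, z)` around the axis `Z` spanned by all vertices of facet `i'` except `v j'`, oriented so
that the facet has `θ = 0` and `K` has `θ ∈ (-π, 0]`. With `K_t = {x ∈ P : θ(x) ∈ [-π, t]}`,
`S₀ = P ∩ {θ = 0}`, and `D` the distribution on `S₀` with density proportional to `ρ`, the
function `t ↦ L_{K_t}^{2d} = det A(K_t) / vol(K_t)²` is differentiable at `0` with derivative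
`(E_{X ∼ D}[‖X‖²] - d - 2) · (d/dt vol K_t |₀) / (vol K)³`. -/
theorem stmt5 {d m : ℕ} (K : Set (Euc d)) (hbody : IsConvexBody K)
    (hiso : IsIsotropic K) (hsimp : IsSimplicialPolytope d K)
    (a : Fin m → Euc d) (c : Fin m → ℝ) (ha : ∀ i, a i ≠ 0)
    (hrep : K = ⋂ i, {x : Euc d | ⟪a i, x⟫ ≤ c i})
    (hirr : ∀ i : Fin m, K ≠ ⋂ j ∈ Finset.univ.erase i, {x : Euc d | ⟪a j, x⟫ ≤ c j})
    (i' : Fin m)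
    (P : Set (Euc d)) (hP : P = ⋂ j ∈ Finset.univ.erase i', {x : Euc d | ⟪a j, x⟫ ≤ c j})
    (v : Fin d → Euc d) (hvind : AffineIndependent ℝ v)
    (hfacet : K ∩ {x : Euc d | ⟪a i', x⟫ = c i'} = convexHull ℝ (Set.range v))
    (j' : Fin d)
    (Z : AffineSubspace ℝ (Euc d)) (hZ : Z = affineSpan ℝ (v '' {j | j ≠ j'}))
    (o : Euc d) (ho : o ∈ (Z : Set (Euc d)) ∩ K)
    (u w : Euc d) (hu : u ∈ Z.directionᗮ) (hw : w ∈ Z.directionᗮ)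
    (hun : ‖u‖ = 1) (hwn : ‖w‖ = 1) (huw : ⟪u, w⟫ = 0)
    (θ ρ : Euc d → ℝ)
    (hθ : θ = fun x => polarAngle ⟪x - o, u⟫ ⟪x - o, w⟫)
    (hρ : ρ = fun x => Real.sqrt (⟪x - o, u⟫ ^ 2 + ⟪x - o, w⟫ ^ 2))
    (horient : ∀ x ∈ convexHull ℝ (Set.range v), θ x = 0)
    (hKrange : ∀ x ∈ K, θ x ∈ Set.Ioc (-Real.pi) 0)
    (Kt : ℝ → Set (Euc d))
    (hKt : Kt = fun t => {x ∈ P | θ x ∈ Set.Icc (-Real.pi) t})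
    (S₀ : Set (Euc d)) (hS₀ : S₀ = P ∩ {x : Euc d | θ x = 0})
    (EX : ℝ)
    (hEX : EX = (∫ x in S₀, ‖x‖ ^ 2 * ρ x ∂(μH[(d - 1 : ℝ)])) /
                (∫ x in S₀, ρ x ∂(μH[(d - 1 : ℝ)]))) :
    ∃ V : ℝ, HasDerivAt (fun t => (volume (Kt t)).toReal) V 0 ∧
      HasDerivAt (fun t => (covMatrix (Kt t)).det / (volume (Kt t)).toReal ^ 2)
        ((EX - d - 2) * V / (volume K).toReal ^ 3) 0 := by
  have hd : 0 < d := j'.pos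
  have hw0 : w ≠ 0 := fun h => by simp [h] at hwn
  have hvmem : ∀ i, v i ∈ convexHull ℝ (Set.range v) :=
    fun i => subset_convexHull ℝ _ (Set.mem_range_self i)
  have hvw : ∀ i, ⟪v i - o, w⟫ = 0 := fun i => by
    have h := horient _ (hvmem i)
    rw [hθ] at h
    exact ((polarAngle_eq_zero_iff _ _).1 h).2
  have hva : ∀ i, ⟪a i', v i⟫ = c i' := fun i => (hfacet.symm.subset (hvmem i)).2
  have hKw : ∀ x ∈ K, ⟪x - o, w⟫ ≤ 0 := fun x hx => by
    have h := (hKrange x hx).2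
    rw [hθ] at h
    exact (polarAngle_nonpos_iff _ _).1 h
  have hKa : ∀ x ∈ K, ∀ j, ⟪a j, x⟫ ≤ c j := fun x hx j => by
    rw [hrep] at hx
    exact Set.mem_iInter.1 hx j
  obtain ⟨p, hpK, hpw⟩ := exists_inner_neg_of_interior_nonempty hbody.2.2 hKw hwn
  obtain ⟨l, hl⟩ := exists_eq_smul_of_affineIndependent v hvind hd hw0 (n := a i')
    (fun i j => by rw [inner_sub_right, hva, hva, sub_self])
    (fun i j => by
      rw [real_inner_comm, ← sub_sub_sub_cancel_right _ _ o, inner_sub_left, hvw, hvw, sub_self])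
  have hoa : ⟪a i', o⟫ = c i' := by
    have h := hvw j'
    rw [← hva j', hl, real_inner_smul_left, real_inner_smul_left, real_inner_comm _ w,
      real_inner_comm _ w]
    rw [inner_sub_left] at h
    rw [sub_eq_zero.1 h]
  have hhalf := inner_le_iff_of_eq_smul hl (ha i') hoa (hKa p hpK i') hpw
  have hKP : ∀ x, x ∈ K ↔ x ∈ P ∧ ⟪x - o, w⟫ ≤ 0 := by
    intro x
    simp only [hrep, hP, ← hhalf, Set.mem_iInter, Finset.mem_erase, Finset.mem_univ, and_true,
      Set.mem_ofPred_eq]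
    refine ⟨fun h => ⟨fun j _ => h j, h i'⟩, fun h j => ?_⟩
    by_cases hj : j = i'
    · exact hj ▸ h.2
    · exact h.1 j hj
  have hs : ∀ j ∈ Finset.univ.erase i', ∃ x, ⟪x - o, w⟫ = 0 ∧ ⟪a j, x⟫ ≠ c j := by
    intro j hj
    by_contra! hcon
    obtain ⟨l', hl'⟩ := exists_eq_smul_of_inner_eq_const hcon
    have hhalf' := inner_le_iff_of_eq_smul hl' (ha j) (hcon o (by simp)) (hKa p hpK j) hpw
    refine hirr i' ?_
    rw [← hP]
    ext x
    rw [hKP]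
    refine ⟨fun h => h.1, fun h => ⟨h, (hhalf' x).1 ?_⟩⟩
    rw [hP] at h
    exact Set.mem_iInter₂.1 h j hj
  have hPcl : IsClosed P := by
    rw [hP]
    exact isClosed_biInter fun j _ => isClosed_le (by fun_prop) continuous_const
  have hPconv : Convex ℝ P := by
    rw [hP]
    exact convex_iInter₂ fun j _ => convex_halfSpace_le (innerₛₗ ℝ (a j)).isLinear _
  obtain ⟨δ, hδ, hbdd⟩ := exists_isBounded_polarAngle_le hPcl hPconv hbody.1.isBounded
    (fun x hx hxw => (hKP x).2 ⟨hx, hxw⟩) ((hKP o).1 ho.2).1 hun hwn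
  obtain ⟨hfinite, κ, hκ⟩ := exists_hasDerivAt_integral_hinge hun hwn huw hs hP hδ hbdd
  rw [finrank_euclideanSpace_fin] at hfinite hκ
  have hK0 : Kt 0 = K := by
    ext x
    simp only [hKt, hθ, hKP, Set.mem_ofPred_eq, Set.mem_Icc, polarAngle_neg_pi_le, true_and,
      polarAngle_nonpos_iff]
  have hS₀' : S₀ = {x ∈ P | polarAngle ⟪x - o, u⟫ ⟪x - o, w⟫ = 0} := by
    rw [hS₀, hθ]; rfl
  have hSb : Bornology.IsBounded S₀ := by
    rw [hS₀']
    exact hbdd.subset fun x hx => ⟨hx.1, hx.2.le.trans hδ.le⟩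
  rw [← hS₀'] at hfinite hκ
  have hρc : Continuous ρ := by rw [hρ]; fun_prop
  have hcompact : ∀ᶠ t in nhds (0 : ℝ), Kt t ⊆
      closure {x ∈ P | polarAngle ⟪x - o, u⟫ ⟪x - o, w⟫ ≤ δ} := by
    filter_upwards [eventually_le_nhds hδ] with t ht
    rw [hKt, hθ]
    exact fun x hx => subset_closure ⟨hx.1, hx.2.2.trans ht⟩
  have hvol : (volume (Kt 0)).toReal ≠ 0 := by
    rw [hK0]
    exact (ENNReal.toReal_pos (Measure.measure_pos_of_nonempty_interior _ hbody.2.2).ne'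
      hbody.1.measure_ne_top).ne'
  obtain ⟨hV, hder⟩ := hasDerivAt_det_covMatrix_div (S := Kt)
    (D := fun f => κ * ∫ x in S₀, f x * ρ x ∂(μH[(d - 1 : ℝ)])) (hK0.symm ▸ hiso) hvol
    (hcompact.mono fun t ht =>
      (continuous_id.continuousOn.integrableOn_compact hbdd.isCompact_closure).mono_set ht)
    (hcompact.mono fun t ht f hf =>
      (hf.continuousOn.integrableOn_compact hbdd.isCompact_closure).mono_set ht)
    (fun f hf => by
      have := hκ f hf
      rw [hKt, hθ, hρ]
      exact this)
  refine ⟨_, hV, ?_⟩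
  convert hder using 1
  rw [hK0, ← Finset.mul_sum, sum_setIntegral_sq_mul hρc hSb hfinite]
  simp only [one_mul]
  congr 1
  have hρ0 : ∀ x, 0 ≤ ρ x := fun x => by rw [hρ]; positivity
  by_cases h0 : ∫ x in S₀, ρ x ∂(μH[(d - 1 : ℝ)]) = 0
  · have : ∫ x in S₀, ‖x‖ ^ 2 * ρ x ∂(μH[(d - 1 : ℝ)]) = 0 := by
      have hz := (integral_eq_zero_iff_of_nonneg hρ0
        (integrableOn_of_continuous_of_isBounded hρc hSb hfinite)).1 h0
      refine integral_eq_zero_of_ae (hz.mono fun x hx => ?_)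
      simp only [Pi.zero_apply] at hx ⊢
      rw [hx, mul_zero]
    rw [h0, this]
    simp
  · rw [hEX]
    field_simp
    ring

end
end
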